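/- arXiv:1109.0898 — 2 statements merged into one kernel-verified Lean document; each statement's English description precedes it below -/
import Mathlib

section
/- (Adaptive upper bounds.) Assume sup_{(n,m)∈K_{NM}} (1/n + 1/m + n/N + m/M) → 0 and sup_{(n,m)∈K_{NM}} (log N/(n log(N/n)) + log M/(m log(M/m))) → 0 as N, M → ∞. Suppose the family a = {a_{nm}} satisfies at least one of: (i) min_{(n,m)∈K_{NM}} a_{nm}² n m (n/N)(m/M) → ∞; (ii) liminf min_{(n,m)∈K_{NM}} a_{nm}² n m / (2(n log(N/n) + m log(M/m))) > 1, where under (i) the threshold H → ∞ is chosen with H < c·a_{nm}√(nm(n/N)(m/M)) for all (n,m) ∈ K_{NM} and some fixed c < 1. Then γ_{NM,a}(ψ*_{NM}) → 0. -/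
/-!
Every statistic involved is a sum of entries of `Y` over a block, divided by the square root of the
block's cardinality. Such a normalized sum is Gaussian with unit variance, so its deviations from
its mean obey the Chernoff bound `exp (-x² / 2)` on either side.

*Type I error.* The linear test contributes `exp (-H² / 2)`. By the choice of `V_{nm}`, each block
of size `n × m` contributes at most `1 / (N M G_{nm})` to the scan test, hence each pair `(n, m)` at
most `1 / (N M)`. The union bound then gives `#K / (N M)`, which tends to zero because
`n / N + m / M → 0` uniformly on `K` leaves room for only `o(N M)` pairs.

*Type II error.* It suffices that for every pair in `K` the mean of one of the two statistics
exceeds its threshold by an amount tending to infinity. Under (i), the mean of `t_lin` is at least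
`μ = a √(n m (n/N)(m/M)) → ∞` and exceeds `H` by at least `(1 - c) μ`. Under (ii), put
`D = n log (N/n) + m log (M/m)`, which tends to infinity. The bound
`log (N choose n) ≤ n log (N/n) + n` and the uniform conditions on `K` give
`V_{nm}² ≤ 2 (1 + o(1)) D`, whereas the mean of `Y_C` on the true block is at least `√(2 c D)` with
`c > 1`, so that the gap is of order `√D`.
-/

open MeasureTheory ProbabilityTheory Filter Topology
open scoped Classical

noncomputable section

/-- Standard normal cumulative distribution function `Φ`. -/
def Phi (x : ℝ) : ℝ := ((gaussianReal 0 1) (Set.Iic x)).toReal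

/-- Law `P_S` of the `N × M` observation matrix `Y_{ij} = s_{ij} + ξ_{ij}`
with i.i.d. standard Gaussian noise. -/
def matLaw (N M : ℕ) (S : Fin N → Fin M → ℝ) : Measure ((Fin N × Fin M) → ℝ) :=
  Measure.pi fun ij => gaussianReal (S ij.1 ij.2) 1

/-- First-type error `α(ψ) = E_0 ψ`. -/
def alphaErr (N M : ℕ) (ψ : ((Fin N × Fin M) → ℝ) → ℝ) : ℝ :=
  ∫ y, ψ y ∂(matLaw N M fun _ _ => 0)

/-- Second-type error `β(ψ, S) = E_S (1 - ψ)`. -/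
def betaErr (N M : ℕ) (S : Fin N → Fin M → ℝ) (ψ : ((Fin N × Fin M) → ℝ) → ℝ) : ℝ :=
  ∫ y, (1 - ψ y) ∂(matLaw N M S)

/-- The alternative class `S_{nm,a}`: some `n × m` submatrix `C = A × B` has all entries `≥ a`,
and all other entries vanish. -/
def SAlt (N M n m : ℕ) (a : ℝ) : Set (Fin N → Fin M → ℝ) :=
  {S | ∃ (A : Finset (Fin N)) (B : Finset (Fin M)), A.card = n ∧ B.card = m ∧
      (∀ i j, i ∈ A → j ∈ B → a ≤ S i j) ∧ ∀ i j, ¬(i ∈ A ∧ j ∈ B) → S i j = 0}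

/-- Maximal second-type error `β_{nm,a}(ψ)`. -/
def betaMax (N M n m : ℕ) (a : ℝ) (ψ : ((Fin N × Fin M) → ℝ) → ℝ) : ℝ :=
  sSup ((fun S => betaErr N M S ψ) '' SAlt N M n m a)

/-- Linear statistic `t_lin`. -/
def tlin (N M : ℕ) (y : (Fin N × Fin M) → ℝ) : ℝ :=
  (∑ ij : Fin N × Fin M, y ij) / Real.sqrt ((N : ℝ) * M)

/-- Linear test `ψ^lin_H = 1{t_lin > H}`. -/
def psiLin (N M : ℕ) (H : ℝ) (y : (Fin N × Fin M) → ℝ) : ℝ :=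
  if H < tlin N M y then 1 else 0

/-- Normalized submatrix sum `Y_C` for `C = A × B`. -/
def YC (N M : ℕ) (y : (Fin N × Fin M) → ℝ)
    (A : Finset (Fin N)) (B : Finset (Fin M)) : ℝ :=
  (∑ i ∈ A, ∑ j ∈ B, y (i, j)) / Real.sqrt ((A.card : ℝ) * B.card)

/-- Scan statistic `t_max = max_{C ∈ C_{nm}} Y_C`. -/
def tmax (N M n m : ℕ) (y : (Fin N × Fin M) → ℝ) : ℝ :=
  sSup {v | ∃ (A : Finset (Fin N)) (B : Finset (Fin M)),
    A.card = n ∧ B.card = m ∧ v = YC N M y A B}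

/-- `G_{nm} = C(N,n) · C(M,m)`, the number of `n × m` submatrices. -/
def Gnm (N M n m : ℕ) : ℕ := N.choose n * M.choose m

/-- Threshold `T_{nm} = √(2 log G_{nm})`. -/
def Tnm (N M n m : ℕ) : ℝ := Real.sqrt (2 * Real.log (Gnm N M n m : ℝ))

/-- Scan test `ψ^max_T = 1{t_max > T}`. -/
def psiMax (N M n m : ℕ) (T : ℝ) (y : (Fin N × Fin M) → ℝ) : ℝ :=
  if T < tmax N M n m y then 1 else 0

/-- `V_{nm} = √(2 log(N M G_{nm}))`. -/
def Vnm (N M n m : ℕ) : ℝ := Real.sqrt (2 * Real.log ((N : ℝ) * M * Gnm N M n m))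

/-- Adaptive scan statistic `t_{NM,max} = max_{(n,m) ∈ K} max_{C ∈ C_{nm}} Y_C / V_{nm}`. -/
def tAdapt (N M : ℕ) (K : Finset (ℕ × ℕ)) (y : (Fin N × Fin M) → ℝ) : ℝ :=
  sSup {v | ∃ nm ∈ K, ∃ (A : Finset (Fin N)) (B : Finset (Fin M)),
    A.card = nm.1 ∧ B.card = nm.2 ∧ v = YC N M y A B / Vnm N M nm.1 nm.2}

/-- Adaptive scan test `ψ^max_{NM} = 1{t_{NM,max} > 1}`. -/
def psiAdapt (N M : ℕ) (K : Finset (ℕ × ℕ)) (y : (Fin N × Fin M) → ℝ) : ℝ :=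
  if 1 < tAdapt N M K y then 1 else 0

/-- Maximal second-type error over the combined alternative
`∪_{(n,m) ∈ K} S_{nm, a_{nm}}`. -/
def betaMaxAdapt (N M : ℕ) (K : Finset (ℕ × ℕ)) (a : ℕ × ℕ → ℝ)
    (ψ : ((Fin N × Fin M) → ℝ) → ℝ) : ℝ :=
  sSup ((fun S => betaErr N M S ψ) '' ⋃ nm ∈ K, SAlt N M nm.1 nm.2 (a nm))

/-! ### Normalized sums of independent Gaussians -/

section NormalizedSum

variable {ι : Type*}

/-- The sum of `y` over `C`, divided by the square root of the cardinality of `C` (so `0` when `C`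
is empty). Both `t_lin` and `Y_C` have this form. -/
def normalizedSum (C : Finset ι) (y : ι → ℝ) : ℝ := (∑ i ∈ C, y i) / √(C.card : ℝ)

lemma hasSubgaussianMGF_sub_gaussianReal (m : ℝ) (v : NNReal) :
    HasSubgaussianMGF (fun x => x - m) v (gaussianReal m v) := by
  rw [← HasSubgaussianMGF.id_map_iff (by fun_prop), gaussianReal_map_sub_const, sub_self]
  exact ⟨integrable_exp_mul_gaussianReal, fun t => by simp [mgf_id_gaussianReal]⟩

variable [Fintype ι]

lemma hasSubgaussianMGF_sum_sub_pi_gaussianReal (m : ι → ℝ) (v : ι → NNReal) (C : Finset ι) :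
    HasSubgaussianMGF (fun y : ι → ℝ => ∑ i ∈ C, (y i - m i)) (∑ i ∈ C, v i)
      (Measure.pi fun i => gaussianReal (m i) (v i)) := by
  refine .sum_of_iIndepFun (iIndepFun_pi (X := fun i x => x - m i) fun i => by fun_prop)
    fun i _ => ?_
  have h := hasSubgaussianMGF_sub_gaussianReal (m i) (v i)
  rw [← (measurePreserving_eval (fun i => gaussianReal (m i) (v i)) i).map_eq] at h
  exact .of_map (Y := fun y : ι → ℝ => y i) (X := fun x => x - m i)
    (measurable_pi_apply i).aemeasurable h

lemma hasSubgaussianMGF_normalizedSum_sub (m : ι → ℝ) (C : Finset ι) :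
    HasSubgaussianMGF (fun y => normalizedSum C y - normalizedSum C m) 1
      (Measure.pi fun i => gaussianReal (m i) 1) := by
  rcases C.eq_empty_or_nonempty with rfl | hC
  · refine ⟨fun t => by simp [normalizedSum], fun t => ?_⟩
    simp only [normalizedSum, Finset.sum_empty, zero_div, sub_self, mgf_const, mul_zero,
      Real.exp_zero, Real.one_le_exp_iff]
    positivity
  · have hcard : (C.card : ℝ) ≠ 0 := by exact_mod_cast hC.card_ne_zero
    convert (hasSubgaussianMGF_sum_sub_pi_gaussianReal m (fun _ => 1) C).const_mul
      (√(C.card : ℝ))⁻¹ using 1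
    · ext y
      simp only [normalizedSum, Finset.sum_sub_distrib]
      ring
    · ext
      simp only [inv_pow, Real.sq_sqrt (Nat.cast_nonneg _), Finset.sum_const, nsmul_eq_mul, mul_one]
      exact (inv_mul_cancel₀ hcard).symm

lemma measureReal_le_normalizedSum_le {m : ι → ℝ} {C : Finset ι} {T x : ℝ} (hx : 0 ≤ x)
    (hT : normalizedSum C m + x ≤ T) :
    (Measure.pi fun i => gaussianReal (m i) 1).real {y | T ≤ normalizedSum C y}
      ≤ Real.exp (-x ^ 2 / 2) := by
  have htail := (hasSubgaussianMGF_normalizedSum_sub m C).measure_ge_le hx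
  rw [NNReal.coe_one, mul_one] at htail
  refine (measureReal_mono (fun y (hy : T ≤ _) => ?_) (measure_ne_top _ _)).trans htail
  exact le_sub_iff_add_le'.2 (hT.trans hy)

lemma measureReal_normalizedSum_le_le {m : ι → ℝ} {C : Finset ι} {T x : ℝ} (hx : 0 ≤ x)
    (hT : T + x ≤ normalizedSum C m) :
    (Measure.pi fun i => gaussianReal (m i) 1).real {y | normalizedSum C y ≤ T}
      ≤ Real.exp (-x ^ 2 / 2) := by
  have htail := (hasSubgaussianMGF_normalizedSum_sub m C).neg.measure_ge_le hx
  rw [NNReal.coe_one, mul_one] at htail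
  refine (measureReal_mono (fun y (hy : _ ≤ T) => ?_) (measure_ne_top _ _)).trans htail
  simp only [Set.mem_ofPred_eq, Pi.neg_apply]
  linarith

end NormalizedSum

/-! ### The statistics and the combined test -/

instance isProbabilityMeasure_matLaw (N M : ℕ) (S : Fin N → Fin M → ℝ) :
    IsProbabilityMeasure (matLaw N M S) := by
  unfold matLaw; infer_instance

section Statistics

variable {N M : ℕ}

lemma tlin_eq_normalizedSum (y : Fin N × Fin M → ℝ) :
    tlin N M y = normalizedSum Finset.univ y := by
  simp [tlin, normalizedSum]

lemma YC_eq_normalizedSum (y : Fin N × Fin M → ℝ) (A : Finset (Fin N)) (B : Finset (Fin M)) :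
    YC N M y A B = normalizedSum (A ×ˢ B) y := by
  simp [YC, normalizedSum, Finset.sum_product]

lemma lt_sSup_iff_of_nonneg {s : Set ℝ} (hs : BddAbove s) {r : ℝ} (hr : 0 ≤ r) :
    r < sSup s ↔ ∃ x ∈ s, r < x := by
  rcases s.eq_empty_or_nonempty with rfl | hne
  · simpa using hr
  · exact lt_csSup_iff hs hne

lemma lt_tmax_iff {n m : ℕ} {T : ℝ} (hT : 0 ≤ T) (y : Fin N × Fin M → ℝ) :
    T < tmax N M n m y ↔ ∃ (A : Finset (Fin N)) (B : Finset (Fin M)),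
      A.card = n ∧ B.card = m ∧ T < YC N M y A B := by
  have hfin : {v | ∃ (A : Finset (Fin N)) (B : Finset (Fin M)),
      A.card = n ∧ B.card = m ∧ v = YC N M y A B}.Finite :=
    (Set.finite_range fun p : Finset (Fin N) × Finset (Fin M) => YC N M y p.1 p.2).subset
      fun _ ⟨A, B, _, _, hv⟩ => ⟨(A, B), hv.symm⟩
  rw [tmax, lt_sSup_iff_of_nonneg hfin.bddAbove hT]
  aesop

lemma one_lt_tAdapt_iff {K : Finset (ℕ × ℕ)} (hV : ∀ nm ∈ K, 0 < Vnm N M nm.1 nm.2)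
    (y : Fin N × Fin M → ℝ) :
    1 < tAdapt N M K y ↔ ∃ nm ∈ K, Vnm N M nm.1 nm.2 < tmax N M nm.1 nm.2 y := by
  have hfin : {v | ∃ nm ∈ K, ∃ (A : Finset (Fin N)) (B : Finset (Fin M)),
      A.card = nm.1 ∧ B.card = nm.2 ∧ v = YC N M y A B / Vnm N M nm.1 nm.2}.Finite :=
    (K.finite_toSet.biUnion fun nm _ => Set.finite_range
      fun p : Finset (Fin N) × Finset (Fin M) => YC N M y p.1 p.2 / Vnm N M nm.1 nm.2).subset
      fun _ ⟨_, hnm, A, B, _, _, hv⟩ => Set.mem_biUnion hnm ⟨(A, B), hv.symm⟩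
  rw [tAdapt, lt_sSup_iff_of_nonneg hfin.bddAbove zero_le_one]
  constructor
  · rintro ⟨_, ⟨nm, hnm, A, B, hA, hB, rfl⟩, h⟩
    exact ⟨nm, hnm, (lt_tmax_iff (hV nm hnm).le y).2 ⟨A, B, hA, hB, (one_lt_div (hV nm hnm)).1 h⟩⟩
  · rintro ⟨nm, hnm, h⟩
    obtain ⟨A, B, hA, hB, h⟩ := (lt_tmax_iff (hV nm hnm).le y).1 h
    exact ⟨_, ⟨nm, hnm, A, B, hA, hB, rfl⟩, (one_lt_div (hV nm hnm)).2 h⟩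

/-- The combined test `ψ*_{NM} = max{ψ^lin_H, ψ^max_{NM}}`. -/
def psiStar (N M : ℕ) (K : Finset (ℕ × ℕ)) (H : ℝ) (y : Fin N × Fin M → ℝ) : ℝ :=
  max (psiLin N M H y) (psiAdapt N M K y)

/-- The maximal risk `γ_{NM,a}(ψ) = α(ψ) + sup_{S ∈ S_{NM,a}} β(ψ, S)`. -/
def maxRisk (N M : ℕ) (K : Finset (ℕ × ℕ)) (a : ℕ × ℕ → ℝ) (ψ : (Fin N × Fin M → ℝ) → ℝ) : ℝ :=
  alphaErr N M ψ + betaMaxAdapt N M K a ψ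

lemma psiStar_eq_indicator (K : Finset (ℕ × ℕ)) (H : ℝ) :
    psiStar N M K H = {y | H < tlin N M y ∨ 1 < tAdapt N M K y}.indicator 1 := by
  ext y
  by_cases hlin : H < tlin N M y <;> by_cases hscan : 1 < tAdapt N M K y <;>
    simp [psiStar, psiLin, psiAdapt, hlin, hscan]

-- The (junk) integral of a non-measurable indicator is still at most the outer measure.
lemma alphaErr_indicator_le (R : Set (Fin N × Fin M → ℝ)) :
    alphaErr N M (R.indicator 1) ≤ (matLaw N M fun _ _ => 0).real R :=
  (ENNReal.ofReal_le_iff_le_toReal (measure_ne_top _ _)).1 <|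
    integral_le_measure (fun y hy => by simp [hy]) fun y hy => by simp_all

lemma betaErr_indicator_le (S : Fin N → Fin M → ℝ) (R : Set (Fin N × Fin M → ℝ)) :
    betaErr N M S (R.indicator 1) ≤ (matLaw N M S).real Rᶜ :=
  (ENNReal.ofReal_le_iff_le_toReal (measure_ne_top _ _)).1 <|
    integral_le_measure (fun y hy => by simp_all) fun y hy => by simp_all

lemma betaMaxAdapt_le {K : Finset (ℕ × ℕ)} {a : ℕ × ℕ → ℝ} {ψ : (Fin N × Fin M → ℝ) → ℝ} {ε : ℝ}
    (hε : 0 ≤ ε) (h : ∀ nm ∈ K, ∀ S ∈ SAlt N M nm.1 nm.2 (a nm), betaErr N M S ψ ≤ ε) :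
    betaMaxAdapt N M K a ψ ≤ ε := by
  refine Real.sSup_le (Set.forall_mem_image.2 fun S hS => ?_) hε
  simp only [Set.mem_iUnion] at hS
  obtain ⟨nm, hnm, hS⟩ := hS
  exact h nm hnm S hS

lemma maxRisk_nonneg {K : Finset (ℕ × ℕ)} {a : ℕ × ℕ → ℝ} {ψ : (Fin N × Fin M → ℝ) → ℝ}
    (h0 : ∀ y, 0 ≤ ψ y) (h1 : ∀ y, ψ y ≤ 1) : 0 ≤ maxRisk N M K a ψ :=
  add_nonneg (integral_nonneg h0) <| Real.sSup_nonneg <| Set.forall_mem_image.2 fun _ _ =>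
    integral_nonneg fun y => sub_nonneg.2 (h1 y)

end Statistics

/-! ### Error bounds for fixed sizes -/

section FiniteSample

variable {N M n m : ℕ}

lemma Gnm_pos (hn : n ≤ N) (hm : m ≤ M) : 0 < Gnm N M n m :=
  Nat.mul_pos (Nat.choose_pos hn) (Nat.choose_pos hm)

lemma one_lt_mul_Gnm (hNM : 1 < N * M) (hn : n ≤ N) (hm : m ≤ M) :
    (1 : ℝ) < (N : ℝ) * M * Gnm N M n m := by
  exact_mod_cast hNM.trans_le (Nat.le_mul_of_pos_right _ (Gnm_pos hn hm))

lemma Vnm_pos (hNM : 1 < N * M) (hn : n ≤ N) (hm : m ≤ M) : 0 < Vnm N M n m :=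
  Real.sqrt_pos.2 (mul_pos two_pos (Real.log_pos (one_lt_mul_Gnm hNM hn hm)))

lemma Vnm_sq (hNM : 1 < N * M) (hn : n ≤ N) (hm : m ≤ M) :
    Vnm N M n m ^ 2 = 2 * Real.log ((N : ℝ) * M * Gnm N M n m) :=
  Real.sq_sqrt (mul_pos two_pos (Real.log_pos (one_lt_mul_Gnm hNM hn hm))).le

lemma exp_neg_Vnm_sq_div_two (hNM : 1 < N * M) (hn : n ≤ N) (hm : m ≤ M) :
    Real.exp (-Vnm N M n m ^ 2 / 2) = ((N : ℝ) * M * Gnm N M n m)⁻¹ := by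
  have hpos := zero_lt_one.trans (one_lt_mul_Gnm hNM hn hm)
  rw [Vnm_sq hNM hn hm, neg_div, mul_div_cancel_left₀ _ two_ne_zero, Real.exp_neg,
    Real.exp_log hpos]

lemma measureReal_lt_tlin_le {H : ℝ} (hH : 0 ≤ H) :
    (matLaw N M fun _ _ => 0).real {y | H < tlin N M y} ≤ Real.exp (-H ^ 2 / 2) := by
  simp only [tlin_eq_normalizedSum]
  exact (measureReal_mono fun y (hy : H < _) => hy.le).trans
    (measureReal_le_normalizedSum_le hH (by simp [normalizedSum]))

lemma measureReal_lt_tmax_le {T : ℝ} (hT : 0 ≤ T) :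
    (matLaw N M fun _ _ => 0).real {y | T < tmax N M n m y}
      ≤ Gnm N M n m * Real.exp (-T ^ 2 / 2) := by
  set blocks : Finset (Finset (Fin N) × Finset (Fin M)) :=
    Finset.univ.powersetCard n ×ˢ Finset.univ.powersetCard m with hblocks
  have hcard : blocks.card = Gnm N M n m := by simp [hblocks, Gnm]
  have hcover : {y | T < tmax N M n m y} ⊆
      ⋃ p ∈ blocks, {y | T ≤ normalizedSum (p.1 ×ˢ p.2) y} := by
    intro y hy
    obtain ⟨A, B, hA, hB, h⟩ := (lt_tmax_iff hT y).1 hy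
    rw [YC_eq_normalizedSum] at h
    exact Set.mem_biUnion (x := (A, B)) (by simp [hblocks, hA, hB]) h.le
  calc _ ≤ ∑ p ∈ blocks, (matLaw N M fun _ _ => 0).real {y | T ≤ normalizedSum (p.1 ×ˢ p.2) y} :=
        (measureReal_mono hcover (measure_ne_top _ _)).trans (measureReal_biUnion_finset_le _ _)
    _ ≤ blocks.card • Real.exp (-T ^ 2 / 2) := Finset.sum_le_card_nsmul _ _ _ fun p _ =>
        measureReal_le_normalizedSum_le hT (by simp [normalizedSum])
    _ = _ := by rw [hcard, nsmul_eq_mul]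

lemma measureReal_Vnm_lt_tmax_le (hNM : 1 < N * M) (hn : n ≤ N) (hm : m ≤ M) :
    (matLaw N M fun _ _ => 0).real {y | Vnm N M n m < tmax N M n m y} ≤ ((N : ℝ) * M)⁻¹ := by
  refine (measureReal_lt_tmax_le (Vnm_pos hNM hn hm).le).trans_eq ?_
  have hG : (Gnm N M n m : ℝ) ≠ 0 := by exact_mod_cast (Gnm_pos hn hm).ne'
  rw [exp_neg_Vnm_sq_div_two hNM hn hm, mul_inv, mul_left_comm, mul_inv_cancel₀ hG, mul_one]

lemma alphaErr_psiStar_le {K : Finset (ℕ × ℕ)} {H : ℝ} (hNM : 1 < N * M) (hH : 0 ≤ H)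
    (hK : ∀ nm ∈ K, nm.1 ≤ N ∧ nm.2 ≤ M) :
    alphaErr N M (psiStar N M K H) ≤ Real.exp (-H ^ 2 / 2) + K.card / ((N : ℝ) * M) := by
  have hV : ∀ nm ∈ K, 0 < Vnm N M nm.1 nm.2 := fun nm hnm => Vnm_pos hNM (hK nm hnm).1 (hK nm hnm).2
  have hregion : {y | H < tlin N M y ∨ 1 < tAdapt N M K y} =
      {y | H < tlin N M y} ∪ ⋃ nm ∈ K, {y | Vnm N M nm.1 nm.2 < tmax N M nm.1 nm.2 y} := by
    ext y
    simp [one_lt_tAdapt_iff hV]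
  rw [psiStar_eq_indicator, hregion]
  refine (alphaErr_indicator_le _).trans <| (measureReal_union_le _ _).trans <|
    add_le_add (measureReal_lt_tlin_le hH) ?_
  calc _ ≤ ∑ nm ∈ K, (matLaw N M fun _ _ => 0).real
          {y | Vnm N M nm.1 nm.2 < tmax N M nm.1 nm.2 y} := measureReal_biUnion_finset_le _ _
    _ ≤ K.card • ((N : ℝ) * M)⁻¹ := Finset.sum_le_card_nsmul _ _ _ fun nm hnm =>
        measureReal_Vnm_lt_tmax_le hNM (hK nm hnm).1 (hK nm hnm).2
    _ = _ := by rw [nsmul_eq_mul, div_eq_mul_inv]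

variable {a : ℝ} {S : Fin N → Fin M → ℝ} {A : Finset (Fin N)} {B : Finset (Fin M)}

lemma card_mul_card_mul_le_sum (hS : ∀ i j, i ∈ A → j ∈ B → a ≤ S i j) :
    (A.card : ℝ) * B.card * a ≤ ∑ ij ∈ A ×ˢ B, S ij.1 ij.2 := by
  simpa using Finset.card_nsmul_le_sum (A ×ˢ B) (fun ij => S ij.1 ij.2) a fun ij hij =>
    hS _ _ (Finset.mem_product.1 hij).1 (Finset.mem_product.1 hij).2

lemma le_normalizedSum_product (hS : ∀ i j, i ∈ A → j ∈ B → a ≤ S i j) :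
    a * √((A.card : ℝ) * B.card) ≤ normalizedSum (A ×ˢ B) fun ij => S ij.1 ij.2 := by
  calc a * √((A.card : ℝ) * B.card)
      = (A.card : ℝ) * B.card * a / √((A.card : ℝ) * B.card) := by
        rw [mul_div_right_comm, Real.div_sqrt, mul_comm]
    _ ≤ _ := by
        rw [normalizedSum, Finset.card_product, Nat.cast_mul]
        gcongr
        exact card_mul_card_mul_le_sum hS

lemma le_normalizedSum_univ (hS : ∀ i j, i ∈ A → j ∈ B → a ≤ S i j)
    (hzero : ∀ i j, ¬(i ∈ A ∧ j ∈ B) → S i j = 0) :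
    a * √((A.card : ℝ) * B.card * ((A.card : ℝ) / N) * ((B.card : ℝ) / M)) ≤
      normalizedSum Finset.univ fun ij : Fin N × Fin M => S ij.1 ij.2 := by
  have hsum : ∑ ij ∈ A ×ˢ B, S ij.1 ij.2 = ∑ ij : Fin N × Fin M, S ij.1 ij.2 :=
    Finset.sum_subset (Finset.subset_univ _) fun _ _ hij => hzero _ _ (by simpa using hij)
  calc a * √((A.card : ℝ) * B.card * ((A.card : ℝ) / N) * ((B.card : ℝ) / M))
      = a * √(((A.card : ℝ) * B.card) ^ 2 / ((N : ℝ) * M)) := by congr 2; ring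
    _ = (A.card : ℝ) * B.card * a / √((N : ℝ) * M) := by
        rw [Real.sqrt_div (by positivity), Real.sqrt_sq (by positivity)]; ring
    _ ≤ _ := by
        rw [normalizedSum, ← hsum, Finset.card_univ, Fintype.card_prod, Fintype.card_fin,
          Fintype.card_fin, Nat.cast_mul]
        gcongr
        exact card_mul_card_mul_le_sum hS

lemma betaErr_psiStar_le_of_tlin (K : Finset (ℕ × ℕ)) {H x : ℝ} (hx : 0 ≤ x)
    (hS : S ∈ SAlt N M n m a)
    (hsep : H + x ≤ a * √((n : ℝ) * m * ((n : ℝ) / N) * ((m : ℝ) / M))) :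
    betaErr N M S (psiStar N M K H) ≤ Real.exp (-x ^ 2 / 2) := by
  obtain ⟨A, B, rfl, rfl, hge, hzero⟩ := hS
  rw [psiStar_eq_indicator]
  refine (betaErr_indicator_le S _).trans <| (measureReal_mono fun y hy => ?_).trans <|
    measureReal_normalizedSum_le_le hx (hsep.trans (le_normalizedSum_univ hge hzero))
  rw [Set.mem_ofPred_eq, ← tlin_eq_normalizedSum]
  exact not_lt.1 fun h => hy (Or.inl h)

lemma betaErr_psiStar_le_of_scan {K : Finset (ℕ × ℕ)} (H : ℝ) {x : ℝ} (hNM : 1 < N * M)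
    (hK : ∀ nm ∈ K, nm.1 ≤ N ∧ nm.2 ≤ M) (hnm : (n, m) ∈ K) (hx : 0 ≤ x)
    (hS : S ∈ SAlt N M n m a) (hsep : Vnm N M n m + x ≤ a * √((n : ℝ) * m)) :
    betaErr N M S (psiStar N M K H) ≤ Real.exp (-x ^ 2 / 2) := by
  obtain ⟨A, B, hA, hB, hge, -⟩ := hS
  have hV : ∀ nm ∈ K, 0 < Vnm N M nm.1 nm.2 := fun nm hnm => Vnm_pos hNM (hK nm hnm).1 (hK nm hnm).2
  rw [← hA, ← hB] at hsep
  rw [psiStar_eq_indicator]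
  refine (betaErr_indicator_le S _).trans <| (measureReal_mono fun y hy => ?_).trans <|
    measureReal_normalizedSum_le_le hx (hsep.trans (le_normalizedSum_product hge))
  rw [Set.mem_ofPred_eq, ← YC_eq_normalizedSum, hA, hB]
  refine not_lt.1 fun h => hy (Or.inr ((one_lt_tAdapt_iff hV y).2 ⟨_, hnm, ?_⟩))
  exact (lt_tmax_iff (hV _ hnm).le y).2 ⟨A, B, hA, hB, h⟩

theorem maxRisk_psiStar_le {K : Finset (ℕ × ℕ)} {a : ℕ × ℕ → ℝ} {H x : ℝ} (hNM : 1 < N * M)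
    (hK : ∀ nm ∈ K, nm.1 ≤ N ∧ nm.2 ≤ M) (hH : 0 ≤ H) (hx : 0 ≤ x)
    (hsep : ∀ nm ∈ K,
      H + x ≤ a nm * √((nm.1 : ℝ) * nm.2 * ((nm.1 : ℝ) / N) * ((nm.2 : ℝ) / M)) ∨
        Vnm N M nm.1 nm.2 + x ≤ a nm * √((nm.1 : ℝ) * nm.2)) :
    maxRisk N M K a (psiStar N M K H) ≤
      Real.exp (-H ^ 2 / 2) + K.card / ((N : ℝ) * M) + Real.exp (-x ^ 2 / 2) :=
  add_le_add (alphaErr_psiStar_le hNM hH hK) <| betaMaxAdapt_le (Real.exp_pos _).le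
    fun nm hnm _ hS => (hsep nm hnm).elim (betaErr_psiStar_le_of_tlin K hx hS)
      (betaErr_psiStar_le_of_scan H hNM hK hnm hx hS)

end FiniteSample

/-! ### The size of the scan threshold -/

section Threshold

/-- `n log (N / n)`, the leading term of `log (N choose n)` for `n / N → 0`. -/
def entropyTerm (N n : ℕ) : ℝ := n * Real.log ((N : ℝ) / n)

variable {N M n m : ℕ} {η : ℝ}

lemma log_choose_le (hn : 1 ≤ n) (hnN : n ≤ N) :
    Real.log (N.choose n) ≤ entropyTerm N n + n := by
  have hn0 : (0 : ℝ) < n := by exact_mod_cast hn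
  have hN0 : (0 : ℝ) < N := by exact_mod_cast hn.trans hnN
  have hchoose : (N.choose n : ℝ) ≤ ((N : ℝ) / n) ^ n * Real.exp n :=
    calc (N.choose n : ℝ) ≤ (N : ℝ) ^ n / n.factorial := Nat.choose_le_pow_div n N
      _ = ((N : ℝ) / n) ^ n * ((n : ℝ) ^ n / n.factorial) := by rw [div_pow]; field_simp
      _ ≤ ((N : ℝ) / n) ^ n * Real.exp n := by
        gcongr
        exact Real.pow_div_factorial_le_exp _ hn0.le n
  calc Real.log (N.choose n) ≤ Real.log (((N : ℝ) / n) ^ n * Real.exp n) :=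
        Real.log_le_log (by exact_mod_cast Nat.choose_pos hnN) hchoose
    _ = entropyTerm N n + n := by
        rw [Real.log_mul (by positivity) (by positivity), Real.log_pow, Real.log_exp, entropyTerm]

lemma log_mul_choose_le (hn : 1 ≤ n) (hnN : n ≤ N) (hlog : Real.log N ≤ η * entropyTerm N n)
    (hsize : n ≤ η * entropyTerm N n) :
    Real.log (N * N.choose n) ≤ (1 + 2 * η) * entropyTerm N n := by
  have hN0 : (N : ℝ) ≠ 0 := by exact_mod_cast Nat.one_le_iff_ne_zero.1 (hn.trans hnN)
  have hchoose : (N.choose n : ℝ) ≠ 0 := by exact_mod_cast (Nat.choose_pos hnN).ne'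
  rw [Real.log_mul hN0 hchoose]
  linarith [log_choose_le hn hnN]

lemma Vnm_sq_le (hNM : 1 < N * M) (hn : 1 ≤ n) (hnN : n ≤ N) (hm : 1 ≤ m) (hmM : m ≤ M)
    (hlogN : Real.log N ≤ η * entropyTerm N n) (hlogM : Real.log M ≤ η * entropyTerm M m)
    (hsizen : n ≤ η * entropyTerm N n) (hsizem : m ≤ η * entropyTerm M m) :
    Vnm N M n m ^ 2 ≤ 2 * ((1 + 2 * η) * (entropyTerm N n + entropyTerm M m)) := by
  have hN : (N * N.choose n : ℝ) ≠ 0 := by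
    exact_mod_cast (Nat.mul_pos (hn.trans hnN) (Nat.choose_pos hnN)).ne'
  have hM : (M * M.choose m : ℝ) ≠ 0 := by
    exact_mod_cast (Nat.mul_pos (hm.trans hmM) (Nat.choose_pos hmM)).ne'
  rw [Vnm_sq hNM hnN hmM, Gnm, Nat.cast_mul, mul_mul_mul_comm, Real.log_mul hN hM]
  linarith [log_mul_choose_le hn hnN hlogN hsizen, log_mul_choose_le hm hmM hlogM hsizem]

lemma le_log_div_of_div_lt_exp_neg {R : ℝ} (hn : 1 ≤ n) (hnN : n ≤ N)
    (h : (n : ℝ) / N < Real.exp (-R)) : R ≤ Real.log ((N : ℝ) / n) := by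
  have hdiv : (0 : ℝ) < n / N :=
    div_pos (Nat.cast_pos.2 hn) (Nat.cast_pos.2 (hn.trans hnN))
  rw [← inv_div, Real.log_inv, le_neg, Real.log_le_iff_le_exp hdiv]
  exact h.le

lemma le_mul_entropyTerm (hη : 0 < η) (h : η⁻¹ ≤ Real.log ((N : ℝ) / n)) :
    n ≤ η * entropyTerm N n := by
  have hone : 1 ≤ η * Real.log ((N : ℝ) / n) := (inv_le_iff_one_le_mul₀' hη).1 h
  calc (n : ℝ) ≤ n * (η * Real.log ((N : ℝ) / n)) := le_mul_of_one_le_right n.cast_nonneg hone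
    _ = η * entropyTerm N n := mul_left_comm _ _ _

lemma le_entropyTerm {R : ℝ} (hn : 1 ≤ n) (hR : 0 ≤ R) (h : R ≤ Real.log ((N : ℝ) / n)) :
    R ≤ entropyTerm N n :=
  h.trans (le_mul_of_one_le_left (hR.trans h) (by exact_mod_cast hn))

lemma log_le_mul_entropyTerm_of_add_lt (hN : 0 < entropyTerm N n)
    (hM : 0 < entropyTerm M m)
    (h : Real.log N / entropyTerm N n + Real.log M / entropyTerm M m < η) :
    Real.log N ≤ η * entropyTerm N n ∧ Real.log M ≤ η * entropyTerm M m := by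
  have hlogN := div_nonneg (Real.log_natCast_nonneg N) hN.le
  have hlogM := div_nonneg (Real.log_natCast_nonneg M) hM.le
  exact ⟨(div_le_iff₀ hN).1 (by linarith), (div_le_iff₀ hM).1 (by linarith)⟩

lemma Vnm_le_sqrt (hNM : 1 < N * M) (hη : 0 < η) (hn : 1 ≤ n) (hnN : n ≤ N) (hm : 1 ≤ m)
    (hmM : m ≤ M) (hratioN : η⁻¹ ≤ Real.log ((N : ℝ) / n))
    (hratioM : η⁻¹ ≤ Real.log ((M : ℝ) / m))
    (hlog : Real.log N / entropyTerm N n + Real.log M / entropyTerm M m < η) :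
    Vnm N M n m ≤ √(2 * (1 + 2 * η) * (entropyTerm N n + entropyTerm M m)) := by
  have hη' := inv_pos.2 hη
  obtain ⟨hlogN, hlogM⟩ := log_le_mul_entropyTerm_of_add_lt
    (hη'.trans_le (le_entropyTerm hn hη'.le hratioN))
    (hη'.trans_le (le_entropyTerm hm hη'.le hratioM)) hlog
  rw [mul_assoc]
  exact Real.le_sqrt_of_sq_le (Vnm_sq_le hNM hn hnN hm hmM hlogN hlogM
    (le_mul_entropyTerm hη hratioN) (le_mul_entropyTerm hη hratioM))

lemma sqrt_mul_le_mul_sqrt {a s c D : ℝ} (ha : 0 ≤ a) (hD : 0 < D)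
    (h : c ≤ a ^ 2 * s / (2 * D)) : √(2 * c * D) ≤ a * √s := by
  calc √(2 * c * D) ≤ √(a ^ 2 * s) :=
        Real.sqrt_le_sqrt (by linarith [(le_div_iff₀ (mul_pos two_pos hD)).1 h])
    _ = a * √s := by rw [Real.sqrt_mul (sq_nonneg a), Real.sqrt_sq ha]

lemma eventually_sqrt_mul_add_le {p q : ℝ} (hp : 0 ≤ p) (hpq : p < q) (x : ℝ) :
    ∀ᶠ D in atTop, √(p * D) + x ≤ √(q * D) := by
  have hgap : Tendsto (fun D => (√q - √p) * √D) atTop atTop :=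
    Real.tendsto_sqrt_atTop.const_mul_atTop (sub_pos.2 (Real.sqrt_lt_sqrt hp hpq))
  filter_upwards [hgap.eventually_ge_atTop x] with D hD
  rw [Real.sqrt_mul hp, Real.sqrt_mul (hp.trans hpq.le)]
  linarith

end Threshold

/-! ### Passage to the limit -/

section Asymptotics

variable {N M : ℕ → ℕ} {K : ℕ → Finset (ℕ × ℕ)} {a : ℕ → ℕ × ℕ → ℝ} {H : ℕ → ℝ}

lemma tendsto_exp_neg_sq_div_two :
    Tendsto (fun x : ℝ => Real.exp (-x ^ 2 / 2)) atTop (𝓝 0) := by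
  simp only [neg_div]
  exact Real.tendsto_exp_neg_atTop_nhds_zero.comp
    ((tendsto_pow_atTop two_ne_zero).atTop_div_const two_pos)

lemma div_lt_of_sum_div_lt {n m N M : ℕ} {ε : ℝ} (h : (n : ℝ) / N + (m : ℝ) / M < ε) :
    (n : ℝ) / N < ε ∧ (m : ℝ) / M < ε :=
  ⟨(le_add_of_nonneg_right (by positivity)).trans_lt h,
    (le_add_of_nonneg_left (by positivity)).trans_lt h⟩

lemma card_le_sq_mul {N M : ℕ} {K : Finset (ℕ × ℕ)} {δ : ℝ} (hδ : 0 ≤ δ)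
    (hpos : ∀ nm ∈ K, 1 ≤ nm.1 ∧ 1 ≤ nm.2)
    (hsparse : ∀ nm ∈ K, (nm.1 : ℝ) ≤ δ * N ∧ (nm.2 : ℝ) ≤ δ * M) :
    (K.card : ℝ) ≤ δ ^ 2 * (N * M) := by
  have hsub : K ⊆ Finset.Icc 1 ⌊δ * N⌋₊ ×ˢ Finset.Icc 1 ⌊δ * M⌋₊ := fun nm hnm => by
    simp only [Finset.mem_product, Finset.mem_Icc]
    exact ⟨⟨(hpos nm hnm).1, Nat.le_floor (hsparse nm hnm).1⟩,
      ⟨(hpos nm hnm).2, Nat.le_floor (hsparse nm hnm).2⟩⟩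
  calc (K.card : ℝ) ≤ (⌊δ * N⌋₊ : ℝ) * (⌊δ * M⌋₊ : ℝ) := by
        exact_mod_cast (Finset.card_le_card hsub).trans_eq (by simp)
    _ ≤ (δ * N) * (δ * M) := by gcongr <;> exact Nat.floor_le (by positivity)
    _ = δ ^ 2 * (N * M) := by ring

lemma tendsto_card_div (hb : ∀ t, ∀ nm ∈ K t, 1 ≤ nm.1 ∧ nm.1 ≤ N t ∧ 1 ≤ nm.2 ∧ nm.2 ≤ M t)
    (hsparse : ∀ ε : ℝ, 0 < ε → ∀ᶠ t in atTop, ∀ nm ∈ K t,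
      (nm.1 : ℝ) / N t + (nm.2 : ℝ) / M t < ε) :
    Tendsto (fun t => ((K t).card : ℝ) / ((N t : ℝ) * M t)) atTop (𝓝 0) := by
  refine tendsto_order.2 ⟨fun ε hε => .of_forall fun t => hε.trans_le (by positivity),
    fun ε hε => ?_⟩
  have hδ : 0 < √(ε / 2) := Real.sqrt_pos.2 (half_pos hε)
  filter_upwards [hsparse _ hδ] with t ht
  have hcard : ((K t).card : ℝ) ≤ √(ε / 2) ^ 2 * (N t * M t) := by
    refine card_le_sq_mul hδ.le (fun nm hnm => ⟨(hb t nm hnm).1, (hb t nm hnm).2.2.1⟩)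
      fun nm hnm => ?_
    obtain ⟨hn, hnN, hm, hmM⟩ := hb t nm hnm
    obtain ⟨hltN, hltM⟩ := div_lt_of_sum_div_lt (ht nm hnm)
    exact ⟨((div_lt_iff₀ (by exact_mod_cast hn.trans hnN)).1 hltN).le,
      ((div_lt_iff₀ (by exact_mod_cast hm.trans hmM)).1 hltM).le⟩
  rw [Real.sq_sqrt (half_pos hε).le] at hcard
  exact (div_le_of_le_mul₀ (by positivity) (half_pos hε).le hcard).trans_lt (half_lt_self hε)

theorem tendsto_maxRisk_psiStar
    (hb : ∀ t, ∀ nm ∈ K t, 1 ≤ nm.1 ∧ nm.1 ≤ N t ∧ 1 ≤ nm.2 ∧ nm.2 ≤ M t)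
    (hN : Tendsto N atTop atTop) (hM : Tendsto M atTop atTop)
    (hsparse : ∀ ε : ℝ, 0 < ε → ∀ᶠ t in atTop, ∀ nm ∈ K t,
      (nm.1 : ℝ) / N t + (nm.2 : ℝ) / M t < ε)
    (hH : Tendsto H atTop atTop)
    (hsep : ∀ x : ℝ, ∀ᶠ t in atTop, ∀ nm ∈ K t,
      H t + x ≤ a t nm * √((nm.1 : ℝ) * nm.2 * ((nm.1 : ℝ) / N t) * ((nm.2 : ℝ) / M t)) ∨
        Vnm (N t) (M t) nm.1 nm.2 + x ≤ a t nm * √((nm.1 : ℝ) * nm.2)) :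
    Tendsto (fun t => maxRisk (N t) (M t) (K t) (a t) (psiStar (N t) (M t) (K t) (H t)))
      atTop (𝓝 0) := by
  refine tendsto_order.2 ⟨fun ε hε => .of_forall fun t => hε.trans_le ?_, fun ε hε => ?_⟩
  · rw [psiStar_eq_indicator]
    exact maxRisk_nonneg (Set.indicator_nonneg fun _ _ => zero_le_one)
      (Set.indicator_le_self' fun _ _ => zero_le_one)
  obtain ⟨x, hx, hxε⟩ := ((eventually_ge_atTop 0).and
    (tendsto_exp_neg_sq_div_two.eventually_lt_const hε)).exists
  have hbound : Tendsto (fun t => Real.exp (-H t ^ 2 / 2) + (K t).card / ((N t : ℝ) * M t) +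
      Real.exp (-x ^ 2 / 2)) atTop (𝓝 (0 + 0 + Real.exp (-x ^ 2 / 2))) :=
    ((tendsto_exp_neg_sq_div_two.comp hH).add (tendsto_card_div hb hsparse)).add_const _
  filter_upwards [hbound.eventually_lt_const (by simpa using hxε), hsep x,
    (hN.atTop_mul_atTop₀ hM).eventually_gt_atTop 1, hH.eventually_ge_atTop 0]
    with t hlt hsept hNM hH0
  exact (maxRisk_psiStar_le hNM (fun nm hnm => ⟨(hb t nm hnm).2.1, (hb t nm hnm).2.2.2⟩) hH0 hx
    hsept).trans_lt hlt

lemma eventually_tlin_separation (ha : ∀ t, ∀ nm ∈ K t, 0 < a t nm)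
    (hinf : ∀ c : ℝ, ∀ᶠ t in atTop, ∀ nm ∈ K t,
      c ≤ a t nm ^ 2 * ((nm.1 : ℝ) * nm.2 * ((nm.1 : ℝ) / N t) * ((nm.2 : ℝ) / M t)))
    {c : ℝ} (hc : c < 1)
    (hHc : ∀ t, ∀ nm ∈ K t, H t < c * (a t nm *
      √((nm.1 : ℝ) * nm.2 * ((nm.1 : ℝ) / N t) * ((nm.2 : ℝ) / M t)))) (x : ℝ) :
    ∀ᶠ t in atTop, ∀ nm ∈ K t,
      H t + x ≤ a t nm * √((nm.1 : ℝ) * nm.2 * ((nm.1 : ℝ) / N t) * ((nm.2 : ℝ) / M t)) := by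
  have hc' : 0 < 1 - c := sub_pos.2 hc
  filter_upwards [hinf ((x / (1 - c)) ^ 2)] with t ht nm hnm
  have hmean : x / (1 - c) ≤
      a t nm * √((nm.1 : ℝ) * nm.2 * ((nm.1 : ℝ) / N t) * ((nm.2 : ℝ) / M t)) := by
    refine le_of_sq_le_sq ?_ (mul_nonneg (ha t nm hnm).le (Real.sqrt_nonneg _))
    rw [mul_pow, Real.sq_sqrt (by positivity)]
    exact ht nm hnm
  rw [div_le_iff₀ hc'] at hmean
  linarith [hHc t nm hnm]

lemma eventually_scan_separation
    (hb : ∀ t, ∀ nm ∈ K t, 1 ≤ nm.1 ∧ nm.1 ≤ N t ∧ 1 ≤ nm.2 ∧ nm.2 ≤ M t)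
    (ha : ∀ t, ∀ nm ∈ K t, 0 < a t nm)
    (hN : Tendsto N atTop atTop) (hM : Tendsto M atTop atTop)
    (hsparse : ∀ ε : ℝ, 0 < ε → ∀ᶠ t in atTop, ∀ nm ∈ K t,
      (nm.1 : ℝ) / N t + (nm.2 : ℝ) / M t < ε)
    (hlog : ∀ ε : ℝ, 0 < ε → ∀ᶠ t in atTop, ∀ nm ∈ K t,
      Real.log (N t) / entropyTerm (N t) nm.1 + Real.log (M t) / entropyTerm (M t) nm.2 < ε)
    {c : ℝ} (hc : 1 < c)
    (hlim : ∀ᶠ t in atTop, ∀ nm ∈ K t, c ≤ a t nm ^ 2 * ((nm.1 : ℝ) * nm.2) /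
      (2 * (entropyTerm (N t) nm.1 + entropyTerm (M t) nm.2))) (x : ℝ) :
    ∀ᶠ t in atTop, ∀ nm ∈ K t,
      Vnm (N t) (M t) nm.1 nm.2 + x ≤ a t nm * √((nm.1 : ℝ) * nm.2) := by
  obtain ⟨η, hη, hηc⟩ : ∃ η, 0 < η ∧ 1 + 2 * η < c :=
    ⟨(c - 1) / 4, by linarith, by linarith⟩
  obtain ⟨D₀, hD₀⟩ := eventually_atTop.1
    (eventually_sqrt_mul_add_le (p := 2 * (1 + 2 * η)) (q := 2 * c) (by positivity)
      (by linarith) x)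
  have hR : 0 < max η⁻¹ D₀ := lt_max_of_lt_left (inv_pos.2 hη)
  filter_upwards [hsparse _ (Real.exp_pos (-max η⁻¹ D₀)), hlog η hη, hlim,
    (hN.atTop_mul_atTop₀ hM).eventually_gt_atTop 1] with t hsparset hlogt hlimt hNM nm hnm
  obtain ⟨hn, hnN, hm, hmM⟩ := hb t nm hnm
  obtain ⟨hltN, hltM⟩ := div_lt_of_sum_div_lt (hsparset nm hnm)
  have hRN := le_log_div_of_div_lt_exp_neg hn hnN hltN
  have hRM := le_log_div_of_div_lt_exp_neg hm hmM hltM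
  have hDN := le_entropyTerm hn hR.le hRN
  have hDM := le_entropyTerm hm hR.le hRM
  have hD : 0 < entropyTerm (N t) nm.1 + entropyTerm (M t) nm.2 := by linarith
  have hV := Vnm_le_sqrt hNM hη hn hnN hm hmM ((le_max_left _ _).trans hRN)
    ((le_max_left _ _).trans hRM) (hlogt nm hnm)
  have hgap := hD₀ (entropyTerm (N t) nm.1 + entropyTerm (M t) nm.2)
    (by linarith [le_max_right η⁻¹ D₀])
  have hmean := sqrt_mul_le_mul_sqrt (ha t nm hnm).le hD (hlimt nm hnm)
  linarith

end Asymptotics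

theorem stmt5_general (N M : ℕ → ℕ) (K : ℕ → Finset (ℕ × ℕ)) (a : ℕ → ℕ × ℕ → ℝ) (H : ℕ → ℝ)
    (hb : ∀ t, ∀ nm ∈ K t, 1 ≤ nm.1 ∧ nm.1 ≤ N t ∧ 1 ≤ nm.2 ∧ nm.2 ≤ M t)
    (ha : ∀ t, ∀ nm ∈ K t, 0 < a t nm)
    (hN : Tendsto N atTop atTop) (hM : Tendsto M atTop atTop)
    (hsparse : ∀ ε : ℝ, 0 < ε → ∀ᶠ t in atTop, ∀ nm ∈ K t,
      (nm.1 : ℝ) / N t + (nm.2 : ℝ) / M t < ε)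
    (hH : Tendsto H atTop atTop)
    (hcond :
      ((∀ c : ℝ, ∀ᶠ t in atTop, ∀ nm ∈ K t,
          c ≤ a t nm ^ 2 *
            ((nm.1 : ℝ) * nm.2 * ((nm.1 : ℝ) / N t) * ((nm.2 : ℝ) / M t))) ∧
        ∃ c : ℝ, c < 1 ∧ ∀ t, ∀ nm ∈ K t,
          H t < c * (a t nm *
            √((nm.1 : ℝ) * nm.2 * ((nm.1 : ℝ) / N t) * ((nm.2 : ℝ) / M t)))) ∨
      (∀ ε : ℝ, 0 < ε → ∀ᶠ t in atTop, ∀ nm ∈ K t,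
          Real.log (N t) / entropyTerm (N t) nm.1 +
            Real.log (M t) / entropyTerm (M t) nm.2 < ε) ∧
        ∃ c : ℝ, 1 < c ∧ ∀ᶠ t in atTop, ∀ nm ∈ K t,
          c ≤ a t nm ^ 2 * ((nm.1 : ℝ) * nm.2) /
            (2 * (entropyTerm (N t) nm.1 + entropyTerm (M t) nm.2))) :
    Tendsto (fun t => maxRisk (N t) (M t) (K t) (a t) (psiStar (N t) (M t) (K t) (H t)))
      atTop (𝓝 0) := by
  refine tendsto_maxRisk_psiStar hb hN hM hsparse hH fun x => ?_
  rcases hcond with ⟨hinf, c, hc, hHc⟩ | ⟨hlog, c, hc, hlim⟩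
  · exact (eventually_tlin_separation ha hinf hc hHc x).mono fun t ht nm hnm => .inl (ht nm hnm)
  · exact (eventually_scan_separation hb ha hN hM hsparse hlog hc hlim x).mono
      fun t ht nm hnm => .inr (ht nm hnm)

/-- Theorem 3 (adaptive upper bounds): under the uniform conditions on `K_{NM}`,
if either (i) `min_{(n,m) ∈ K} a_{nm}² n m (n/N)(m/M) → ∞` (with `H → ∞`,
`H < c a_{nm} √(n m (n/N)(m/M))` for all `(n,m) ∈ K` and some fixed `c < 1`) or
(ii) `liminf min_{(n,m) ∈ K} a_{nm}² n m / (2(n log(N/n) + m log(M/m))) > 1`,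
then `γ_{NM,a}(ψ*_{NM}) → 0` for `ψ*_{NM} = max{ψ^lin_H, ψ^max_{NM}}`. -/
theorem stmt5 (N M : ℕ → ℕ) (K : ℕ → Finset (ℕ × ℕ)) (a : ℕ → ℕ × ℕ → ℝ) (H : ℕ → ℝ)
    (hb : ∀ t, ∀ nm ∈ K t, 1 ≤ nm.1 ∧ nm.1 ≤ N t ∧ 1 ≤ nm.2 ∧ nm.2 ≤ M t)
    (ha : ∀ t, ∀ nm ∈ K t, 0 < a t nm)
    (hN : Tendsto N atTop atTop) (hM : Tendsto M atTop atTop)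
    (hunif : ∀ ε : ℝ, 0 < ε → ∀ᶠ t in atTop, ∀ nm ∈ K t,
      1 / (nm.1 : ℝ) + 1 / (nm.2 : ℝ) + (nm.1 : ℝ) / N t + (nm.2 : ℝ) / M t < ε)
    (hunif' : ∀ ε : ℝ, 0 < ε → ∀ᶠ t in atTop, ∀ nm ∈ K t,
      Real.log (N t) / ((nm.1 : ℝ) * Real.log ((N t : ℝ) / nm.1)) +
        Real.log (M t) / ((nm.2 : ℝ) * Real.log ((M t : ℝ) / nm.2)) < ε)
    (hH : Tendsto H atTop atTop)
    (hcond :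
      ((∀ c : ℝ, ∀ᶠ t in atTop, ∀ nm ∈ K t,
          c ≤ a t nm ^ 2 *
            ((nm.1 : ℝ) * nm.2 * ((nm.1 : ℝ) / N t) * ((nm.2 : ℝ) / M t))) ∧
        ∃ c : ℝ, c < 1 ∧ ∀ t, ∀ nm ∈ K t,
          H t < c * (a t nm * Real.sqrt
            ((nm.1 : ℝ) * nm.2 * ((nm.1 : ℝ) / N t) * ((nm.2 : ℝ) / M t)))) ∨
      ∃ c : ℝ, 1 < c ∧ ∀ᶠ t in atTop, ∀ nm ∈ K t,
        c ≤ a t nm ^ 2 * ((nm.1 : ℝ) * nm.2) /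
          (2 * ((nm.1 : ℝ) * Real.log ((N t : ℝ) / nm.1) +
            (nm.2 : ℝ) * Real.log ((M t : ℝ) / nm.2)))) :
    Tendsto (fun t =>
      alphaErr (N t) (M t) (fun y =>
          max (psiLin (N t) (M t) (H t) y) (psiAdapt (N t) (M t) (K t) y)) +
        betaMaxAdapt (N t) (M t) (K t) (a t) (fun y =>
          max (psiLin (N t) (M t) (H t) y) (psiAdapt (N t) (M t) (K t) y)))
      atTop (nhds 0) := by
  refine stmt5_general N M K a H hb ha hN hM (fun ε hε => (hunif ε hε).mono fun t ht nm hnm => ?_)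
    hH (hcond.imp_right fun h => ⟨hunif', h⟩)
  have hinv : (0 : ℝ) ≤ 1 / nm.1 + 1 / nm.2 := by positivity
  linarith [ht nm hnm]
end
end

section
/- (Upper bounds for rectangle detection.) Assume N, M, n, m → ∞, p = n/N → 0, q = m/M → 0. If liminf a² n m / (2(log(1/p) + log(1/q))) > 1 and η = η_{nm} is chosen so that η → 0, nη → ∞, mη → ∞ and |log η| = o(|log(pq)|), then the grid scan test ψ_Z satisfies γ^rect_{nm,a}(ψ_Z) → 0, i.e. α(ψ_Z) → 0 and sup_{S∈S^rect_{nm,a}} β(ψ_Z,S) → 0. -/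
/-!
Each rectangle statistic is a normalized sum of `n m` independent unit-variance Gaussians, so it is
`N(μ, 1)` with `μ` its value at the signal.

Under the null hypothesis, a union bound over at most `K L` rectangles and the Mills-ratio bound
`P(ξ > x) ≤ φ(x) / x` at `x = √(2 log (K L))`, where `φ(x) = 1 / (√(2π) K L)`, give
`α ≤ 1 / (√(2π) x)`, which vanishes since `K, L → ∞`.

Under an alternative, once `n η, m η ≥ 1` some grid rectangle covers at least `n m (1 - η)²` cells
of the support of the signal, so its statistic has mean at least `a √(n m) (1 - η)²`. With
`Λ = log (1/p) + log (1/q)`, the bounds `K ≤ 1 / (p η)` and `L ≤ 1 / (q η)` make the threshold at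
most `√(2 Λ (1 + o(1)))`, whereas the liminf condition gives `a √(n m) ≥ √(2 c Λ)` for some `c > 1`.
The mean thus exceeds the threshold by an amount tending to infinity uniformly over the
alternatives, and Chebyshev's inequality concludes.
-/

open MeasureTheory ProbabilityTheory Filter Topology
open scoped Classical

noncomputable section

/-- Rectangle alternative class `S^rect_{nm,a}`: some `n × m` rectangle
`E_{kl} = {k+1,…,k+n} × {l+1,…,l+m}` has all entries `≥ a`, zero outside. -/
def SAltRect (N M n m : ℕ) (a : ℝ) : Set (Fin N → Fin M → ℝ) :=
  {S | ∃ k l : ℕ, k + n ≤ N ∧ l + m ≤ M ∧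
    (∀ (i : Fin N) (j : Fin M),
        (k ≤ i.val ∧ i.val < k + n ∧ l ≤ j.val ∧ j.val < l + m) → a ≤ S i j) ∧
    ∀ (i : Fin N) (j : Fin M),
        ¬(k ≤ i.val ∧ i.val < k + n ∧ l ≤ j.val ∧ j.val < l + m) → S i j = 0}

/-- Maximal second-type error over the rectangle alternative. -/
def betaMaxRect (N M n m : ℕ) (a : ℝ) (ψ : ((Fin N × Fin M) → ℝ) → ℝ) : ℝ :=
  sSup ((fun S => betaErr N M S ψ) '' SAltRect N M n m a)

/-- Normalized sum over the rectangle with upper-left offset `(k,l)` and size `n × m`. -/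
def ZrectStat (N M n m : ℕ) (y : (Fin N × Fin M) → ℝ) (k l : ℕ) : ℝ :=
  (∑ ij : Fin N × Fin M,
    if k ≤ ij.1.val ∧ ij.1.val < k + n ∧ l ≤ ij.2.val ∧ ij.2.val < l + m
    then y ij else 0) / Real.sqrt ((n : ℝ) * m)

/-- Grid offset `n_k = ⌈(k-1) n η⌉`. -/
def gridPt (n k : ℕ) (η : ℝ) : ℕ := ⌈((k : ℝ) - 1) * n * η⌉₊

/-- `K`, the largest `k ≥ 1` with `n_k ≤ N - n` (grid size along a dimension). -/
def gridMax (N n : ℕ) (η : ℝ) : ℕ :=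
  Nat.findGreatest (fun k => 1 ≤ k ∧ gridPt n k η + n ≤ N) (N + 2)

/-- Grid scan statistic `Z = max_{1 ≤ k ≤ K, 1 ≤ l ≤ L} Z_{kl}`. -/
def Zgrid (N M n m : ℕ) (η : ℝ) (y : (Fin N × Fin M) → ℝ) : ℝ :=
  sSup {v | ∃ k ∈ Finset.Icc 1 (gridMax N n η), ∃ l ∈ Finset.Icc 1 (gridMax M m η),
    v = ZrectStat N M n m y (gridPt n k η) (gridPt m l η)}

/-- Grid scan test `ψ_Z = 1{Z > √(2 log(K L))}`. -/
def psiZ (N M n m : ℕ) (η : ℝ) (y : (Fin N × Fin M) → ℝ) : ℝ :=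
  if Real.sqrt (2 * Real.log ((gridMax N n η : ℝ) * gridMax M m η)) <
      Zgrid N M n m η y then 1 else 0

/-! ### Gaussian distributions -/

section Gaussian

lemma hasLaw_sum_gaussianReal {ι Ω : Type*} {mΩ : MeasurableSpace Ω} {P : Measure Ω}
    {X : ι → Ω → ℝ} {μ : ι → ℝ} {v : ι → NNReal}
    (hX : ∀ i, HasLaw (X i) (gaussianReal (μ i) (v i)) P) (hindep : iIndepFun X P)
    (s : Finset ι) :
    HasLaw (fun ω => ∑ i ∈ s, X i ω) (gaussianReal (∑ i ∈ s, μ i) (∑ i ∈ s, v i)) P := by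
  have := hindep.isProbabilityMeasure
  induction s using Finset.induction_on with
  | empty => simpa using hasLaw_dirac_of_ae_eq (P := P) (x := (0 : ℝ)) ae_eq_rfl
  | insert i s hi ih =>
    have hadd : IndepFun (X i) (fun ω => ∑ j ∈ s, X j ω) P := by
      simpa only [← Finset.sum_apply] using
        (hindep.indepFun_finsetSum_of_notMem₀ (fun j => (hX j).aemeasurable) hi).symm
    simp only [Finset.sum_insert hi]
    exact ⟨(hX i).aemeasurable.add ih.aemeasurable,
      gaussianReal_add_gaussianReal_of_indepFun hadd (hX i).map_eq ih.map_eq⟩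

lemma hasLaw_sum_pi_gaussianReal {ι : Type*} [Fintype ι] (μ : ι → ℝ) (v : ι → NNReal)
    (s : Finset ι) :
    HasLaw (fun y : ι → ℝ => ∑ i ∈ s, y i) (gaussianReal (∑ i ∈ s, μ i) (∑ i ∈ s, v i))
      (Measure.pi fun i => gaussianReal (μ i) (v i)) :=
  hasLaw_sum_gaussianReal
    (fun i => (measurePreserving_eval (fun i => gaussianReal (μ i) (v i)) i).hasLaw)
    (iIndepFun_pi (X := fun _ x => x) fun _ => aemeasurable_id) s

lemma gaussianPDFReal_le_mul_exp (μ : ℝ) (v : NNReal) (x y : ℝ) :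
    gaussianPDFReal μ v y ≤ gaussianPDFReal μ v x * Real.exp (-((x - μ) / v) * (y - x)) := by
  obtain rfl | hv := eq_or_ne v 0
  · simp
  have : (v : ℝ) ≠ 0 := NNReal.coe_ne_zero.2 hv
  simp only [gaussianPDFReal]
  rw [mul_assoc _ (Real.exp _), ← Real.exp_add]
  gcongr
  have hexp : -(y - μ) ^ 2 / (2 * v) =
      -(x - μ) ^ 2 / (2 * v) + -((x - μ) / v) * (y - x) - (y - x) ^ 2 / (2 * v) := by
    field_simp
    ring
  rw [hexp]
  exact sub_le_self _ (by positivity)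

lemma gaussianReal_real_Ioi_le {μ x : ℝ} (v : NNReal) (hx : μ < x) :
    (gaussianReal μ v).real (Set.Ioi x) ≤ v / (x - μ) * gaussianPDFReal μ v x := by
  obtain rfl | hv := eq_or_ne v 0
  · simp [measureReal_def, hx.le]
  have hv' : (0 : ℝ) < v := by exact_mod_cast hv.bot_lt
  have hslope : -((x - μ) / v) < 0 := neg_lt_zero.2 (div_pos (sub_pos.2 hx) hv')
  have hint : IntegrableOn (fun y => Real.exp (-((x - μ) / v) * y)) (Set.Ioi x) :=
    integrableOn_exp_mul_Ioi hslope x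
  have hshift : ∀ y, Real.exp (-((x - μ) / v) * (y - x)) =
      Real.exp (-((x - μ) / v) * y) * Real.exp ((x - μ) / v * x) := fun y => by
    rw [← Real.exp_add]
    ring_nf
  calc (gaussianReal μ v).real (Set.Ioi x)
      = ∫ y in Set.Ioi x, gaussianPDFReal μ v y := by
        rw [measureReal_def, gaussianReal_apply_eq_integral _ hv,
          ENNReal.toReal_ofReal (integral_nonneg fun y => gaussianPDFReal_nonneg _ _ y)]
    _ ≤ ∫ y in Set.Ioi x, gaussianPDFReal μ v x * Real.exp (-((x - μ) / v) * (y - x)) := by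
        refine integral_mono (integrable_gaussianPDFReal _ _).restrict ?_
          fun y => gaussianPDFReal_le_mul_exp μ v x y
        simp only [hshift]
        exact (hint.mul_const _).const_mul _
    _ = v / (x - μ) * gaussianPDFReal μ v x := by
        simp only [hshift]
        rw [integral_const_mul, integral_mul_const, integral_exp_mul_Ioi hslope, neg_div_neg_eq,
          div_mul_eq_mul_div, ← Real.exp_add, neg_mul, neg_add_cancel, Real.exp_zero, one_div_div,
          mul_comm]

lemma gaussianPDFReal_sqrt_two_mul_log {x : ℝ} (hx : 1 ≤ x) :
    gaussianPDFReal 0 1 √(2 * Real.log x) = (√(2 * Real.pi) * x)⁻¹ := by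
  have hexponent : -(√(2 * Real.log x) - 0) ^ 2 / (2 * ((1 : NNReal) : ℝ)) = -Real.log x := by
    rw [sub_zero, Real.sq_sqrt (mul_nonneg two_pos.le (Real.log_nonneg hx)), NNReal.coe_one]
    ring
  rw [gaussianPDFReal, hexponent, Real.exp_neg, Real.exp_log (by linarith), NNReal.coe_one,
    mul_one, mul_inv]

lemma gaussianReal_real_Iic_le {μ x : ℝ} (v : NNReal) (hx : x < μ) :
    (gaussianReal μ v).real (Set.Iic x) ≤ v / (μ - x) ^ 2 := by
  have hcheb := meas_ge_le_variance_div_sq (memLp_id_gaussianReal (μ := μ) (v := v) 2)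
    (sub_pos.2 hx)
  simp only [variance_id_gaussianReal, id, integral_id_gaussianReal] at hcheb
  refine ENNReal.toReal_le_of_le_ofReal (by positivity) ((measure_mono fun y hy => ?_).trans hcheb)
  rw [Set.mem_Iic] at hy
  rw [Set.mem_ofPred_eq, abs_of_nonpos (by linarith)]
  linarith

end Gaussian

section FixedSize

variable {N M n m k l : ℕ} {a η : ℝ}

/-! ### Rectangles and their statistics -/

/-- The indices `i : Fin N` with `k ≤ i < k'`, that is, one side of a rectangle. The interval is
given by natural numbers, so that it need not fit into `Fin N`. -/
def finIco (N k k' : ℕ) : Finset (Fin N) := {i | k ≤ i.val ∧ i.val < k'}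

/-- The cells of the rectangle `E_{kl}` of size `n × m`, as a subset of an `N × M` matrix. -/
def rectCells (N M n m k l : ℕ) : Finset (Fin N × Fin M) :=
  finIco N k (k + n) ×ˢ finIco M l (l + m)

lemma card_finIco {k' : ℕ} (h : k' ≤ N) : (finIco N k k').card = k' - k := by
  have hmem : ∀ i ∈ Finset.Ico k k', i < N := fun i hi => (Finset.mem_Ico.1 hi).2.trans_le h
  have hattach : finIco N k k' = (Finset.Ico k k').attachFin hmem := by
    ext i
    simp [finIco]
  rw [hattach, Finset.card_attachFin, Nat.card_Ico]

lemma card_rectCells (hk : k + n ≤ N) (hl : l + m ≤ M) :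
    (rectCells N M n m k l).card = n * m := by
  rw [rectCells, Finset.card_product, card_finIco hk, card_finIco hl, Nat.add_sub_cancel_left,
    Nat.add_sub_cancel_left]

lemma mem_rectCells {ij : Fin N × Fin M} :
    ij ∈ rectCells N M n m k l ↔
      k ≤ ij.1.val ∧ ij.1.val < k + n ∧ l ≤ ij.2.val ∧ ij.2.val < l + m := by
  simp [rectCells, finIco, and_assoc]

lemma ZrectStat_eq_sum_div (y : Fin N × Fin M → ℝ) :
    ZrectStat N M n m y k l = (∑ ij ∈ rectCells N M n m k l, y ij) / √((n : ℝ) * m) := by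
  simp only [ZrectStat, ← mem_rectCells, Finset.sum_ite_mem, Finset.univ_inter]

lemma measurable_ZrectStat (N M n m k l : ℕ) :
    Measurable fun y => ZrectStat N M n m y k l := by
  simp only [ZrectStat_eq_sum_div]
  fun_prop

lemma hasLaw_ZrectStat (hn : 0 < n) (hm : 0 < m) (hk : k + n ≤ N) (hl : l + m ≤ M)
    (S : Fin N → Fin M → ℝ) :
    HasLaw (fun y => ZrectStat N M n m y k l)
      (gaussianReal (ZrectStat N M n m (fun ij => S ij.1 ij.2) k l) 1) (matLaw N M S) := by
  have hvar : (∑ _ij ∈ rectCells N M n m k l, (1 : NNReal)) /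
      NNReal.mk (√((n : ℝ) * m) ^ 2) (sq_nonneg _) = 1 := by
    rw [Finset.sum_const, card_rectCells hk hl, nsmul_one]
    refine NNReal.eq ?_
    rw [NNReal.coe_div, NNReal.coe_mk, Real.sq_sqrt (by positivity)]
    push_cast
    exact div_self (by positivity)
  have hlaw := gaussianReal_div_const (hasLaw_sum_pi_gaussianReal
    (fun ij : Fin N × Fin M => S ij.1 ij.2) (fun _ => 1) (rectCells N M n m k l)) √((n : ℝ) * m)
  rw [hvar] at hlaw
  simpa only [ZrectStat_eq_sum_div, matLaw] using hlaw

lemma mem_SAltRect_iff {S : Fin N → Fin M → ℝ} :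
    S ∈ SAltRect N M n m a ↔ ∃ k l, k + n ≤ N ∧ l + m ≤ M ∧
      (∀ ij ∈ rectCells N M n m k l, a ≤ S ij.1 ij.2) ∧
      ∀ ij ∉ rectCells N M n m k l, S ij.1 ij.2 = 0 := by
  simp only [SAltRect, Set.mem_ofPred_eq, mem_rectCells, Prod.forall]

/-! ### The grid of offsets -/

/-- The grid offsets `n_1, …, n_K` along a dimension of length `N`. -/
def gridOffsets (N n : ℕ) (η : ℝ) : Finset ℕ :=
  (Finset.Icc 1 (gridMax N n η)).image (gridPt n · η)

lemma gridPt_one (n : ℕ) (η : ℝ) : gridPt n 1 η = 0 := by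
  simp [gridPt]

lemma monotone_gridPt (n : ℕ) (hη : 0 ≤ η) : Monotone (gridPt n · η) := fun k k' h => by
  simp only [gridPt]
  gcongr

lemma gridMax_spec (hnN : n ≤ N) (η : ℝ) :
    1 ≤ gridMax N n η ∧ gridPt n (gridMax N n η) η + n ≤ N :=
  Nat.findGreatest_spec (P := fun k => 1 ≤ k ∧ gridPt n k η + n ≤ N) (m := 1)
    (by omega) (by simpa [gridPt_one] using hnN)

lemma gridMax_le (hn : 0 < n) (hnN : n ≤ N) (hη : 0 < η) (hη1 : η ≤ 1) :
    (gridMax N n η : ℝ) ≤ (N : ℝ) / n / η := by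
  have hceil : ((gridMax N n η : ℝ) - 1) * n * η ≤ gridPt n (gridMax N n η) η := Nat.le_ceil _
  have hfit : (gridPt n (gridMax N n η) η : ℝ) + n ≤ N := by
    exact_mod_cast (gridMax_spec hnN η).2
  have hn0 : (0 : ℝ) < n := by exact_mod_cast hn
  rw [le_div_iff₀ hη, le_div_iff₀ hn0]
  nlinarith

lemma div_le_gridMax (hn : 0 < n) (hnN : n ≤ N) (hη1 : η ≤ 1) : N / n ≤ gridMax N n η := by
  have hpos : 1 ≤ N / n := (Nat.one_le_div_iff hn).2 hnN
  have hpt : gridPt n (N / n) η ≤ (N / n - 1) * n := by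
    refine Nat.ceil_le.2 ?_
    rw [Nat.cast_mul, Nat.cast_sub hpos, Nat.cast_one]
    have : (1 : ℝ) ≤ (N / n : ℕ) := by exact_mod_cast hpos
    exact mul_le_of_le_one_right (mul_nonneg (by linarith) n.cast_nonneg) hη1
  refine Nat.le_findGreatest ((Nat.div_le_self N n).trans (Nat.le_add_right N 2)) ⟨hpos, ?_⟩
  calc gridPt n (N / n) η + n ≤ (N / n - 1) * n + n := Nat.add_le_add_right hpt n
    _ = N / n * n := by rw [← Nat.succ_mul, Nat.succ_eq_add_one, Nat.sub_add_cancel hpos]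
    _ ≤ N := Nat.div_mul_le_self N n

lemma gridOffsets_nonempty (hnN : n ≤ N) (η : ℝ) : (gridOffsets N n η).Nonempty :=
  (Finset.nonempty_Icc.2 (gridMax_spec hnN η).1).image _

lemma card_gridOffsets_le (N n : ℕ) (η : ℝ) : (gridOffsets N n η).card ≤ gridMax N n η :=
  Finset.card_image_le.trans_eq (by simp)

lemma add_le_of_mem_gridOffsets (hnN : n ≤ N) (hη : 0 ≤ η) (hk : k ∈ gridOffsets N n η) :
    k + n ≤ N := by
  obtain ⟨κ, hκ, rfl⟩ := Finset.mem_image.1 hk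
  exact (Nat.add_le_add_right (monotone_gridPt n hη (Finset.mem_Icc.1 hκ).2) n).trans
    (gridMax_spec hnN η).2

lemma exists_mem_gridOffsets_near (hnη : 1 ≤ (n : ℝ) * η) (hk : k + n ≤ N) :
    ∃ g ∈ gridOffsets N n η, g ≤ k ∧ (k : ℝ) ≤ g + (n : ℝ) * η := by
  have hpos : 0 < (n : ℝ) * η := by linarith
  set f := ⌊(k : ℝ) / ((n : ℝ) * η)⌋₊
  have hfloor_le : (f : ℝ) * (n * η) ≤ k :=
    (le_div_iff₀ hpos).1 (Nat.floor_le (by positivity))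
  have hlt_floor : (k : ℝ) < (f + 1) * (n * η) := (div_lt_iff₀ hpos).1 (Nat.lt_floor_add_one _)
  have hpt : gridPt n (f + 1) η = ⌈(f : ℝ) * (n * η)⌉₊ := by
    simp [gridPt, mul_assoc]
  have hpt_le : gridPt n (f + 1) η ≤ k := hpt ▸ Nat.ceil_le.2 hfloor_le
  have hfk : f ≤ k := by
    exact_mod_cast (le_mul_of_one_le_right f.cast_nonneg hnη).trans hfloor_le
  have hfmax : f + 1 ≤ gridMax N n η := Nat.le_findGreatest (by omega) ⟨by omega, by omega⟩
  refine ⟨gridPt n (f + 1) η,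
    Finset.mem_image_of_mem _ (Finset.mem_Icc.2 ⟨by omega, hfmax⟩), hpt_le, ?_⟩
  have : (f : ℝ) * (n * η) ≤ gridPt n (f + 1) η := hpt ▸ Nat.le_ceil _
  linarith

lemma mul_one_sub_le_card_finIco_inter {g : ℕ} (hk : k + n ≤ N) (hgk : g ≤ k)
    (hkg : (k : ℝ) ≤ g + (n : ℝ) * η) :
    (n : ℝ) * (1 - η) ≤ (finIco N k (k + n) ∩ finIco N g (g + n)).card := by
  have hinter : finIco N k (k + n) ∩ finIco N g (g + n) = finIco N k (g + n) := by
    ext i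
    simp only [finIco, Finset.mem_inter, Finset.mem_filter, Finset.mem_univ, true_and]
    omega
  have hsub : ((g + n : ℕ) : ℝ) ≤ (g + n - k : ℕ) + k := by
    exact_mod_cast (by omega : g + n ≤ g + n - k + k)
  rw [hinter, card_finIco (by omega)]
  push_cast at hsub
  linarith

/-! ### The grid scan test -/

/-- The threshold `√(2 log (K L))` of the grid scan test. -/
def gridThreshold (N M n m : ℕ) (η : ℝ) : ℝ :=
  √(2 * Real.log ((gridMax N n η : ℝ) * gridMax M m η))

/-- The quantity `log (1/p) + log (1/q)`, with `p = n / N` and `q = m / M`. -/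
def logInvDensity (N M n m : ℕ) : ℝ :=
  Real.log ((N : ℝ) / n) + Real.log ((M : ℝ) / m)

lemma logInvDensity_nonneg (hn : 0 < n) (hnN : n ≤ N) (hm : 0 < m) (hmM : m ≤ M) :
    0 ≤ logInvDensity N M n m := by
  have hn0 : (0 : ℝ) < n := by exact_mod_cast hn
  have hm0 : (0 : ℝ) < m := by exact_mod_cast hm
  exact add_nonneg (Real.log_nonneg ((one_le_div hn0).2 (by exact_mod_cast hnN)))
    (Real.log_nonneg ((one_le_div hm0).2 (by exact_mod_cast hmM)))

lemma log_density (hn : 0 < n) (hnN : n ≤ N) (hm : 0 < m) (hmM : m ≤ M) :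
    Real.log ((n : ℝ) / N * (m / M)) = -logInvDensity N M n m := by
  have hn0 : (n : ℝ) ≠ 0 := by positivity
  have hm0 : (m : ℝ) ≠ 0 := by positivity
  have hN0 : (N : ℝ) ≠ 0 := by exact_mod_cast (hn.trans_le hnN).ne'
  have hM0 : (M : ℝ) ≠ 0 := by exact_mod_cast (hm.trans_le hmM).ne'
  rw [Real.log_mul (div_ne_zero hn0 hN0) (div_ne_zero hm0 hM0), ← inv_div (N : ℝ),
    ← inv_div (M : ℝ), Real.log_inv, Real.log_inv, logInvDensity, neg_add]

lemma gridThreshold_le (hn : 0 < n) (hnN : n ≤ N) (hm : 0 < m) (hmM : m ≤ M) (hη : 0 < η)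
    (hη1 : η ≤ 1) :
    gridThreshold N M n m η ≤ √(2 * logInvDensity N M n m + 4 * |Real.log η|) := by
  have hN0 : (0 : ℝ) < N := by exact_mod_cast hn.trans_le hnN
  have hM0 : (0 : ℝ) < M := by exact_mod_cast hm.trans_le hmM
  have hK : (0 : ℝ) < gridMax N n η := by exact_mod_cast (gridMax_spec hnN η).1
  have hL : (0 : ℝ) < gridMax M m η := by exact_mod_cast (gridMax_spec hmM η).1
  have hlog : Real.log ((gridMax N n η : ℝ) * gridMax M m η) ≤
      logInvDensity N M n m + 2 * |Real.log η| :=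
    calc Real.log ((gridMax N n η : ℝ) * gridMax M m η)
        ≤ Real.log ((N : ℝ) / n / η * ((M : ℝ) / m / η)) := by
          gcongr
          exacts [gridMax_le hn hnN hη hη1, gridMax_le hm hmM hη hη1]
      _ = logInvDensity N M n m - 2 * Real.log η := by
          rw [Real.log_mul (by positivity) (by positivity), Real.log_div (by positivity) hη.ne',
            Real.log_div (by positivity) hη.ne', logInvDensity]
          ring
      _ ≤ logInvDensity N M n m + 2 * |Real.log η| := by
          linarith [neg_abs_le (Real.log η)]
  refine Real.sqrt_le_sqrt ?_
  linarith

lemma lt_Zgrid_iff (hnN : n ≤ N) (hmM : m ≤ M) {y : Fin N × Fin M → ℝ} {x : ℝ} :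
    x < Zgrid N M n m η y ↔ ∃ e ∈ gridOffsets N n η ×ˢ gridOffsets M m η,
      x < ZrectStat N M n m y e.1 e.2 := by
  have hvalues : {v | ∃ k ∈ Finset.Icc 1 (gridMax N n η), ∃ l ∈ Finset.Icc 1 (gridMax M m η),
      v = ZrectStat N M n m y (gridPt n k η) (gridPt m l η)} =
      ((gridOffsets N n η ×ˢ gridOffsets M m η).image
        fun e => ZrectStat N M n m y e.1 e.2 : Finset ℝ) := by
    ext v
    simp [gridOffsets, and_assoc, eq_comm]
  have hne := (gridOffsets_nonempty hnN η).product (gridOffsets_nonempty hmM η)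
  rw [Zgrid, hvalues, lt_csSup_iff (Finset.bddAbove _) (Finset.coe_nonempty.2 (hne.image _))]
  simp [and_assoc]

lemma setOf_lt_Zgrid (hnN : n ≤ N) (hmM : m ≤ M) (η x : ℝ) :
    {y | x < Zgrid N M n m η y} = ⋃ e ∈ gridOffsets N n η ×ˢ gridOffsets M m η,
      {y | x < ZrectStat N M n m y e.1 e.2} := by
  ext y
  simp only [Set.mem_ofPred_eq, lt_Zgrid_iff hnN hmM, Set.mem_iUnion, exists_prop]

lemma measurable_Zgrid (hnN : n ≤ N) (hmM : m ≤ M) (η : ℝ) : Measurable (Zgrid N M n m η) := by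
  refine measurable_of_Ioi fun x => ?_
  change MeasurableSet {y | x < Zgrid N M n m η y}
  rw [setOf_lt_Zgrid hnN hmM]
  exact Finset.measurableSet_biUnion _ fun e _ =>
    measurableSet_lt measurable_const (measurable_ZrectStat N M n m e.1 e.2)

lemma alphaErr_psiZ (hnN : n ≤ N) (hmM : m ≤ M) (η : ℝ) :
    alphaErr N M (psiZ N M n m η) =
      (matLaw N M fun _ _ => 0).real {y | gridThreshold N M n m η < Zgrid N M n m η y} :=
  integral_indicator_one (measurableSet_lt measurable_const (measurable_Zgrid hnN hmM η))

lemma betaErr_psiZ (hnN : n ≤ N) (hmM : m ≤ M) (η : ℝ) (S : Fin N → Fin M → ℝ) :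
    betaErr N M S (psiZ N M n m η) =
      (matLaw N M S).real {y | Zgrid N M n m η y ≤ gridThreshold N M n m η} := by
  rw [← integral_indicator_one (measurableSet_le (measurable_Zgrid hnN hmM η) measurable_const)]
  refine integral_congr_ae (ae_of_all _ fun y => ?_)
  change 1 - (if gridThreshold N M n m η < Zgrid N M n m η y then 1 else 0) = _
  by_cases hy : gridThreshold N M n m η < Zgrid N M n m η y
  · simp [hy]
  · simp [hy, not_lt.1 hy]

lemma alphaErr_psiZ_le (hn : 0 < n) (hnN : n ≤ N) (hm : 0 < m) (hmM : m ≤ M) (hη : 0 ≤ η)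
    (hKL : 1 < gridMax N n η * gridMax M m η) :
    alphaErr N M (psiZ N M n m η) ≤ (√(2 * Real.pi) * gridThreshold N M n m η)⁻¹ := by
  set x := gridThreshold N M n m η with hx_def
  set G := gridOffsets N n η ×ˢ gridOffsets M m η
  set κ := (gridMax N n η : ℝ) * gridMax M m η
  have hκ : 1 < κ := by
    unfold κ
    exact_mod_cast hKL
  have hx : 0 < x := Real.sqrt_pos.2 (mul_pos two_pos (Real.log_pos hκ))
  have htail : ∀ e ∈ G, (matLaw N M fun _ _ => 0).real {y | x < ZrectStat N M n m y e.1 e.2} ≤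
      1 / x * (√(2 * Real.pi) * κ)⁻¹ := fun e he => by
    obtain ⟨hk, hl⟩ := Finset.mem_product.1 he
    have hlaw := hasLaw_ZrectStat hn hm (add_le_of_mem_gridOffsets hnN hη hk)
      (add_le_of_mem_gridOffsets hmM hη hl) fun _ _ => 0
    have hmean : ZrectStat N M n m (fun _ => 0) e.1 e.2 = 0 := by simp [ZrectStat]
    rw [hmean] at hlaw
    have hmills := gaussianReal_real_Ioi_le 1 hx
    rw [sub_zero, NNReal.coe_one, hx_def, gridThreshold,
      gaussianPDFReal_sqrt_two_mul_log hκ.le, ← gridThreshold, ← hx_def] at hmills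
    exact (hlaw.measureReal_eq (p := (x < ·)) measurableSet_Ioi).trans_le hmills
  have hcard : (G.card : ℝ) ≤ κ := by
    unfold G κ
    rw [Finset.card_product]
    exact_mod_cast Nat.mul_le_mul (card_gridOffsets_le N n η) (card_gridOffsets_le M m η)
  calc alphaErr N M (psiZ N M n m η)
      ≤ ∑ e ∈ G, (matLaw N M fun _ _ => 0).real {y | x < ZrectStat N M n m y e.1 e.2} := by
        rw [alphaErr_psiZ hnN hmM, setOf_lt_Zgrid hnN hmM]
        exact measureReal_biUnion_finset_le _ _
    _ ≤ G.card * (1 / x * (√(2 * Real.pi) * κ)⁻¹) := by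
        rw [← nsmul_eq_mul]
        exact Finset.sum_le_card_nsmul _ _ _ htail
    _ ≤ κ * (1 / x * (√(2 * Real.pi) * κ)⁻¹) := by
        gcongr
    _ = (√(2 * Real.pi) * x)⁻¹ := by
        field_simp

lemma exists_mem_gridOffsets_le_ZrectStat (ha : 0 ≤ a) (hη1 : η ≤ 1)
    (hnη : 1 ≤ (n : ℝ) * η) (hmη : 1 ≤ (m : ℝ) * η) {S : Fin N → Fin M → ℝ}
    (hS : S ∈ SAltRect N M n m a) :
    ∃ e ∈ gridOffsets N n η ×ˢ gridOffsets M m η,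
      a * √((n : ℝ) * m) * (1 - η) ^ 2 ≤ ZrectStat N M n m (fun ij => S ij.1 ij.2) e.1 e.2 := by
  obtain ⟨k, l, hk, hl, hSa, hS0⟩ := mem_SAltRect_iff.1 hS
  obtain ⟨g, hg, hgk, hkg⟩ := exists_mem_gridOffsets_near hnη hk
  obtain ⟨h, hh, hhl, hlh⟩ := exists_mem_gridOffsets_near hmη hl
  refine ⟨(g, h), Finset.mk_mem_product hg hh, ?_⟩
  have hS_nonneg : ∀ ij : Fin N × Fin M, 0 ≤ S ij.1 ij.2 := fun ij => by
    by_cases hij : ij ∈ rectCells N M n m k l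
    · exact ha.trans (hSa ij hij)
    · exact (hS0 ij hij).ge
  have hoverlap : (n : ℝ) * m * (1 - η) ^ 2 ≤
      (rectCells N M n m k l ∩ rectCells N M n m g h).card := by
    rw [rectCells, rectCells, Finset.product_inter_product, Finset.card_product, Nat.cast_mul]
    calc (n : ℝ) * m * (1 - η) ^ 2 = n * (1 - η) * (m * (1 - η)) := by ring
      _ ≤ _ := mul_le_mul (mul_one_sub_le_card_finIco_inter hk hgk hkg)
        (mul_one_sub_le_card_finIco_inter hl hhl hlh)
        (mul_nonneg m.cast_nonneg (sub_nonneg.2 hη1)) (Nat.cast_nonneg _)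
  have hsum : a * ((n : ℝ) * m * (1 - η) ^ 2) ≤ ∑ ij ∈ rectCells N M n m g h, S ij.1 ij.2 :=
    calc a * ((n : ℝ) * m * (1 - η) ^ 2)
        ≤ a * (rectCells N M n m k l ∩ rectCells N M n m g h).card := by gcongr
      _ = ∑ _ij ∈ rectCells N M n m k l ∩ rectCells N M n m g h, a := by
          rw [Finset.sum_const, nsmul_eq_mul, mul_comm]
      _ ≤ ∑ ij ∈ rectCells N M n m k l ∩ rectCells N M n m g h, S ij.1 ij.2 :=
          Finset.sum_le_sum fun ij hij => hSa ij (Finset.mem_inter.1 hij).1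
      _ ≤ ∑ ij ∈ rectCells N M n m g h, S ij.1 ij.2 :=
          Finset.sum_le_sum_of_subset_of_nonneg Finset.inter_subset_right
            fun ij _ _ => hS_nonneg ij
  rw [ZrectStat_eq_sum_div]
  calc a * √((n : ℝ) * m) * (1 - η) ^ 2 = a * ((n : ℝ) * m * (1 - η) ^ 2) / √((n : ℝ) * m) := by
        rw [mul_assoc, mul_div_assoc, mul_div_right_comm, Real.div_sqrt]
    _ ≤ _ := by gcongr

/-- A lower bound, over all alternatives of signal level `a`, for the distance by which the largest
mean of a grid statistic exceeds the threshold of the grid scan test. -/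
def meanGap (N M n m : ℕ) (a η : ℝ) : ℝ :=
  a * √((n : ℝ) * m) * (1 - η) ^ 2 - gridThreshold N M n m η

lemma betaErr_psiZ_le (hn : 0 < n) (hnN : n ≤ N) (hm : 0 < m) (hmM : m ≤ M) (ha : 0 ≤ a)
    (hη : 0 ≤ η) (hη1 : η ≤ 1) (hnη : 1 ≤ (n : ℝ) * η) (hmη : 1 ≤ (m : ℝ) * η)
    (hgap : 0 < meanGap N M n m a η) {S : Fin N → Fin M → ℝ} (hS : S ∈ SAltRect N M n m a) :
    betaErr N M S (psiZ N M n m η) ≤ 1 / meanGap N M n m a η ^ 2 := by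
  obtain ⟨e, he, hmean⟩ := exists_mem_gridOffsets_le_ZrectStat ha hη1 hnη hmη hS
  obtain ⟨hk, hl⟩ := Finset.mem_product.1 he
  have hlaw := hasLaw_ZrectStat hn hm (add_le_of_mem_gridOffsets hnN hη hk)
    (add_le_of_mem_gridOffsets hmM hη hl) S
  set μ := ZrectStat N M n m (fun ij => S ij.1 ij.2) e.1 e.2
  have hgap_le : meanGap N M n m a η ≤ μ - gridThreshold N M n m η := sub_le_sub_right hmean _
  have hsub : {y | Zgrid N M n m η y ≤ gridThreshold N M n m η} ⊆
      {y | ZrectStat N M n m y e.1 e.2 ≤ gridThreshold N M n m η} :=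
    fun y hy => not_lt.1 fun hlt => hy.not_gt ((lt_Zgrid_iff hnN hmM).2 ⟨e, he, hlt⟩)
  have : IsProbabilityMeasure (matLaw N M S) := by unfold matLaw; infer_instance
  calc betaErr N M S (psiZ N M n m η)
      ≤ (matLaw N M S).real {y | ZrectStat N M n m y e.1 e.2 ≤ gridThreshold N M n m η} := by
        rw [betaErr_psiZ hnN hmM]
        exact measureReal_mono hsub
    _ = (gaussianReal μ 1).real (Set.Iic (gridThreshold N M n m η)) :=
        hlaw.measureReal_eq (p := (· ≤ gridThreshold N M n m η)) measurableSet_Iic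
    _ ≤ 1 / (μ - gridThreshold N M n m η) ^ 2 :=
        gaussianReal_real_Iic_le 1 (sub_pos.1 (hgap.trans_le hgap_le))
    _ ≤ 1 / meanGap N M n m a η ^ 2 := by gcongr

lemma betaMaxRect_psiZ_le (hn : 0 < n) (hnN : n ≤ N) (hm : 0 < m) (hmM : m ≤ M) (ha : 0 ≤ a)
    (hη : 0 ≤ η) (hη1 : η ≤ 1) (hnη : 1 ≤ (n : ℝ) * η) (hmη : 1 ≤ (m : ℝ) * η)
    (hgap : 0 < meanGap N M n m a η) :
    betaMaxRect N M n m a (psiZ N M n m η) ≤ 1 / meanGap N M n m a η ^ 2 :=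
  Real.sSup_le (Set.forall_mem_image.2 fun _ hS =>
    betaErr_psiZ_le hn hnN hm hmM ha hη hη1 hnη hmη hgap hS) (by positivity)

lemma alphaErr_psiZ_nonneg (hnN : n ≤ N) (hmM : m ≤ M) (η : ℝ) :
    0 ≤ alphaErr N M (psiZ N M n m η) :=
  alphaErr_psiZ hnN hmM η ▸ measureReal_nonneg

lemma betaMaxRect_psiZ_nonneg (hnN : n ≤ N) (hmM : m ≤ M) (a η : ℝ) :
    0 ≤ betaMaxRect N M n m a (psiZ N M n m η) :=
  Real.sSup_nonneg (Set.forall_mem_image.2 fun S _ =>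
    betaErr_psiZ hnN hmM η S ▸ measureReal_nonneg)

end FixedSize

/-! ### Asymptotics -/

lemma tendsto_sqrt_mul_sub_sqrt_add_atTop {ι : Type*} {l : Filter ι} {u e δ : ι → ℝ} {c : ℝ}
    (hc : 1 < c) (hu : Tendsto u l atTop) (he : Tendsto (fun t => e t / u t) l (𝓝 0))
    (hδ : Tendsto δ l (𝓝 1)) :
    Tendsto (fun t => √(c * u t) * δ t - √(u t + e t)) l atTop := by
  have hcoef : Tendsto (fun t => √c * δ t - √(1 + e t / u t)) l (𝓝 (√c * 1 - √(1 + 0))) :=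
    (hδ.const_mul _).sub (he.const_add 1).sqrt
  have hpos : 0 < √c * 1 - √(1 + 0) := by
    rw [mul_one, add_zero, sub_pos]
    exact Real.sqrt_lt_sqrt zero_le_one hc
  refine ((Real.tendsto_sqrt_atTop.comp hu).atTop_mul_pos hpos hcoef).congr' ?_
  filter_upwards [hu.eventually_gt_atTop 0] with t ht
  have hfactor : u t + e t = u t * (1 + e t / u t) := by field_simp
  rw [hfactor, Real.sqrt_mul ht.le, Real.sqrt_mul (by linarith), Function.comp_apply]
  ring

section Asymptotics

variable {ι : Type*} {f : Filter ι} {N M n m : ι → ℕ} {a η : ι → ℝ}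

lemma tendsto_div_atTop_of_tendsto_div_zero (hn : ∀ t, 0 < n t) (hnN : ∀ t, n t ≤ N t)
    (hp : Tendsto (fun t => (n t : ℝ) / N t) f (𝓝 0)) :
    Tendsto (fun t => (N t : ℝ) / n t) f atTop := by
  have hpos : ∀ t, (0 : ℝ) < n t / N t := fun t =>
    div_pos (by exact_mod_cast hn t) (by exact_mod_cast (hn t).trans_le (hnN t))
  have hp' := tendsto_nhdsWithin_iff.2 ⟨hp, Eventually.of_forall hpos⟩
  simpa only [Function.comp_def, inv_div] using tendsto_inv_nhdsGT_zero.comp hp'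

lemma tendsto_gridMax (hn : ∀ t, 0 < n t) (hnN : ∀ t, n t ≤ N t) (hη1 : ∀ᶠ t in f, η t ≤ 1)
    (hp : Tendsto (fun t => (n t : ℝ) / N t) f (𝓝 0)) :
    Tendsto (fun t => gridMax (N t) (n t) (η t)) f atTop := by
  have hfloor := tendsto_nat_floor_atTop.comp (tendsto_div_atTop_of_tendsto_div_zero hn hnN hp)
  refine tendsto_atTop_mono' f ?_ hfloor
  filter_upwards [hη1] with t ht
  rw [Function.comp_apply, Nat.floor_div_eq_div]
  exact div_le_gridMax (hn t) (hnN t) ht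

lemma tendsto_gridThreshold (hn : ∀ t, 0 < n t) (hnN : ∀ t, n t ≤ N t) (hm : ∀ t, 0 < m t)
    (hmM : ∀ t, m t ≤ M t) (hη1 : ∀ᶠ t in f, η t ≤ 1)
    (hp : Tendsto (fun t => (n t : ℝ) / N t) f (𝓝 0))
    (hq : Tendsto (fun t => (m t : ℝ) / M t) f (𝓝 0)) :
    Tendsto (fun t => gridThreshold (N t) (M t) (n t) (m t) (η t)) f atTop := by
  have hK := tendsto_natCast_atTop_atTop (R := ℝ).comp (tendsto_gridMax hn hnN hη1 hp)
  have hL := tendsto_natCast_atTop_atTop (R := ℝ).comp (tendsto_gridMax hm hmM hη1 hq)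
  exact Real.tendsto_sqrt_atTop.comp
    ((Real.tendsto_log_atTop.comp (hK.atTop_mul_atTop₀ hL)).const_mul_atTop two_pos)

lemma tendsto_logInvDensity (hn : ∀ t, 0 < n t) (hnN : ∀ t, n t ≤ N t) (hm : ∀ t, 0 < m t)
    (hmM : ∀ t, m t ≤ M t) (hp : Tendsto (fun t => (n t : ℝ) / N t) f (𝓝 0))
    (hq : Tendsto (fun t => (m t : ℝ) / M t) f (𝓝 0)) :
    Tendsto (fun t => logInvDensity (N t) (M t) (n t) (m t)) f atTop :=
  (Real.tendsto_log_atTop.comp (tendsto_div_atTop_of_tendsto_div_zero hn hnN hp)).atTop_add_atTop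
    (Real.tendsto_log_atTop.comp (tendsto_div_atTop_of_tendsto_div_zero hm hmM hq))

lemma tendsto_meanGap {c : ℝ} (hn : ∀ t, 0 < n t) (hnN : ∀ t, n t ≤ N t) (hm : ∀ t, 0 < m t)
    (hmM : ∀ t, m t ≤ M t) (ha : ∀ t, 0 ≤ a t) (hη : ∀ t, 0 < η t)
    (hη0 : Tendsto η f (𝓝 0)) (hp : Tendsto (fun t => (n t : ℝ) / N t) f (𝓝 0))
    (hq : Tendsto (fun t => (m t : ℝ) / M t) f (𝓝 0))
    (hlogη : Tendsto (fun t => |Real.log (η t)| / logInvDensity (N t) (M t) (n t) (m t)) f (𝓝 0))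
    (hc : 1 < c)
    (hsignal : ∀ᶠ t in f, c ≤
      a t ^ 2 * ((n t : ℝ) * m t) / (2 * logInvDensity (N t) (M t) (n t) (m t))) :
    Tendsto (fun t => meanGap (N t) (M t) (n t) (m t) (a t) (η t)) f atTop := by
  set Λ := fun t => logInvDensity (N t) (M t) (n t) (m t)
  have hΛ : Tendsto Λ f atTop := tendsto_logInvDensity hn hnN hm hmM hp hq
  have herr : Tendsto (fun t => 4 * |Real.log (η t)| / (2 * Λ t)) f (𝓝 0) := by
    have := hlogη.const_mul 2
    rw [mul_zero] at this
    refine this.congr fun t => ?_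
    ring
  have hδ : Tendsto (fun t => (1 - η t) ^ 2) f (𝓝 1) := by
    simpa using (hη0.const_sub 1).pow 2
  refine tendsto_atTop_mono' f ?_
    (tendsto_sqrt_mul_sub_sqrt_add_atTop hc (hΛ.const_mul_atTop two_pos) herr hδ)
  filter_upwards [hsignal, hΛ.eventually_gt_atTop 0, hη0.eventually_le_const one_pos]
    with t hst hΛt hη1
  have hmean : √(c * (2 * Λ t)) ≤ a t * √((n t : ℝ) * m t) := by
    rw [← Real.sqrt_sq (ha t), ← Real.sqrt_mul (sq_nonneg _)]
    exact Real.sqrt_le_sqrt ((le_div_iff₀ (mul_pos two_pos hΛt)).1 hst)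
  exact sub_le_sub (mul_le_mul_of_nonneg_right hmean (sq_nonneg _))
    (gridThreshold_le (hn t) (hnN t) (hm t) (hmM t) (hη t) hη1)

lemma tendsto_alphaErr_psiZ (hn : ∀ t, 0 < n t) (hnN : ∀ t, n t ≤ N t) (hm : ∀ t, 0 < m t)
    (hmM : ∀ t, m t ≤ M t) (hη : ∀ t, 0 ≤ η t) (hη1 : ∀ᶠ t in f, η t ≤ 1)
    (hp : Tendsto (fun t => (n t : ℝ) / N t) f (𝓝 0))
    (hq : Tendsto (fun t => (m t : ℝ) / M t) f (𝓝 0)) :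
    Tendsto (fun t => alphaErr (N t) (M t) (psiZ (N t) (M t) (n t) (m t) (η t))) f (𝓝 0) := by
  have hbound := tendsto_inv_atTop_zero.comp ((tendsto_gridThreshold hn hnN hm hmM hη1 hp
    hq).const_mul_atTop (Real.sqrt_pos.2 Real.two_pi_pos))
  refine squeeze_zero' (Eventually.of_forall fun t => alphaErr_psiZ_nonneg (hnN t) (hmM t) _) ?_
    hbound
  filter_upwards [(tendsto_gridMax hn hnN hη1 hp).eventually_gt_atTop 1,
    (tendsto_gridMax hm hmM hη1 hq).eventually_gt_atTop 1] with t hK hL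
  exact alphaErr_psiZ_le (hn t) (hnN t) (hm t) (hmM t) (hη t) (one_lt_mul'' hK hL)

lemma tendsto_betaMaxRect_psiZ (hn : ∀ t, 0 < n t) (hnN : ∀ t, n t ≤ N t)
    (hm : ∀ t, 0 < m t) (hmM : ∀ t, m t ≤ M t) (ha : ∀ t, 0 ≤ a t) (hη : ∀ t, 0 ≤ η t)
    (hη1 : ∀ᶠ t in f, η t ≤ 1) (hnη : ∀ᶠ t in f, 1 ≤ n t * η t) (hmη : ∀ᶠ t in f, 1 ≤ m t * η t)
    (hgap : Tendsto (fun t => meanGap (N t) (M t) (n t) (m t) (a t) (η t)) f atTop) :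
    Tendsto (fun t => betaMaxRect (N t) (M t) (n t) (m t) (a t)
      (psiZ (N t) (M t) (n t) (m t) (η t))) f (𝓝 0) := by
  have hbound := ((tendsto_pow_atTop two_ne_zero).comp hgap).const_div_atTop 1
  refine squeeze_zero' (Eventually.of_forall fun t =>
    betaMaxRect_psiZ_nonneg (hnN t) (hmM t) _ _) ?_ hbound
  filter_upwards [hnη, hmη, hη1, hgap.eventually_gt_atTop 0] with t hnηt hmηt hη1t hgapt
  exact betaMaxRect_psiZ_le (hn t) (hnN t) (hm t) (hmM t) (ha t) (hη t) hη1t hnηt hmηt hgapt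

theorem stmt7_general (hn : ∀ t, 0 < n t) (hnN : ∀ t, n t ≤ N t) (hm : ∀ t, 0 < m t)
    (hmM : ∀ t, m t ≤ M t) (ha : ∀ t, 0 ≤ a t) (hη : ∀ t, 0 < η t)
    (hp : Tendsto (fun t => (n t : ℝ) / N t) f (𝓝 0))
    (hq : Tendsto (fun t => (m t : ℝ) / M t) f (𝓝 0))
    (hη0 : Tendsto η f (𝓝 0))
    (hnη : ∀ᶠ t in f, 1 ≤ n t * η t) (hmη : ∀ᶠ t in f, 1 ≤ m t * η t)
    (hlogη : Tendsto (fun t =>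
      |Real.log (η t)| / |Real.log ((n t : ℝ) / N t * ((m t : ℝ) / M t))|) f (𝓝 0))
    (hliminf : 1 < liminf (fun t => a t ^ 2 * ((n t : ℝ) * m t) /
      (2 * (Real.log ((N t : ℝ) / n t) + Real.log ((M t : ℝ) / m t)))) f) :
    Tendsto (fun t => alphaErr (N t) (M t) (psiZ (N t) (M t) (n t) (m t) (η t))) f (𝓝 0) ∧
    Tendsto (fun t => betaMaxRect (N t) (M t) (n t) (m t) (a t)
      (psiZ (N t) (M t) (n t) (m t) (η t))) f (𝓝 0) := by
  have hΛ t := logInvDensity_nonneg (hn t) (hnN t) (hm t) (hmM t)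
  have hlogη' : Tendsto (fun t =>
      |Real.log (η t)| / logInvDensity (N t) (M t) (n t) (m t)) f (𝓝 0) :=
    hlogη.congr fun t => by
      rw [log_density (hn t) (hnN t) (hm t) (hmM t), abs_neg, abs_of_nonneg (hΛ t)]
  obtain ⟨c, hc, hcliminf⟩ := exists_between hliminf
  have hsignal : ∀ᶠ t in f, c < a t ^ 2 * ((n t : ℝ) * m t) /
      (2 * logInvDensity (N t) (M t) (n t) (m t)) :=
    eventually_lt_of_lt_liminf hcliminf (isBoundedUnder_of ⟨0, fun t =>
      div_nonneg (by positivity) (mul_nonneg two_pos.le (hΛ t))⟩)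
  have hgap := tendsto_meanGap hn hnN hm hmM ha hη hη0 hp hq hlogη' hc
    (hsignal.mono fun _ => le_of_lt)
  have hη1 : ∀ᶠ t in f, η t ≤ 1 := hη0.eventually_le_const one_pos
  exact ⟨tendsto_alphaErr_psiZ hn hnN hm hmM (fun t => (hη t).le) hη1 hp hq,
    tendsto_betaMaxRect_psiZ hn hnN hm hmM ha (fun t => (hη t).le) hη1 hnη hmη hgap⟩

end Asymptotics

/-- Theorem 4 (upper bounds for rectangle detection): if
`liminf a² n m / (2(log(1/p) + log(1/q))) > 1` and the grid mesh `η` satisfies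
`η → 0`, `nη → ∞`, `mη → ∞`, `|log η| = o(|log(pq)|)`, then
`γ^rect_{nm,a}(ψ_Z) → 0`, i.e. `α(ψ_Z) → 0` and the maximal second-type error
over `S^rect_{nm,a}` tends to `0`. -/
theorem stmt7 (N M n m : ℕ → ℕ) (a η : ℕ → ℝ)
    (hb : ∀ t, 1 ≤ n t ∧ n t ≤ N t ∧ 1 ≤ m t ∧ m t ≤ M t)
    (ha : ∀ t, 0 < a t) (hη : ∀ t, 0 < η t)
    (hN : Tendsto N atTop atTop) (hM : Tendsto M atTop atTop)
    (hn : Tendsto n atTop atTop) (hm : Tendsto m atTop atTop)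
    (hp : Tendsto (fun t => (n t : ℝ) / N t) atTop (nhds 0))
    (hq : Tendsto (fun t => (m t : ℝ) / M t) atTop (nhds 0))
    (hη0 : Tendsto η atTop (nhds 0))
    (hnη : Tendsto (fun t => (n t : ℝ) * η t) atTop atTop)
    (hmη : Tendsto (fun t => (m t : ℝ) * η t) atTop atTop)
    (hlogη : Tendsto (fun t =>
        |Real.log (η t)| / |Real.log (((n t : ℝ) / N t) * ((m t : ℝ) / M t))|)
      atTop (nhds 0))
    (hliminf : 1 < Filter.liminf (fun t =>
        a t ^ 2 * ((n t : ℝ) * m t) /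
          (2 * (Real.log ((N t : ℝ) / n t) + Real.log ((M t : ℝ) / m t)))) atTop) :
    Tendsto (fun t => alphaErr (N t) (M t) (psiZ (N t) (M t) (n t) (m t) (η t)))
      atTop (nhds 0) ∧
    Tendsto (fun t =>
        betaMaxRect (N t) (M t) (n t) (m t) (a t) (psiZ (N t) (M t) (n t) (m t) (η t)))
      atTop (nhds 0) := by
  exact stmt7_general (fun t => (hb t).1) (fun t => (hb t).2.1) (fun t => (hb t).2.2.1)
    (fun t => (hb t).2.2.2) (fun t => (ha t).le) hη hp hq hη0 (hnη.eventually_ge_atTop 1)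
    (hmη.eventually_ge_atTop 1) hlogη hliminf
end
end
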